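/- arXiv:1607.04728 — 3 statements merged into one kernel-verified Lean document; each statement's English description precedes it below -/
import Mathlib

section
/- For every aperiodic one-sided or two-sided infinite word x over A, there exists a 3-marker set M for x such that p_M(n) ≤ p_x(4n)/n for every n ≥ 1. -/
open scoped ENNReal Pointwise

universe u

variable {A : Type u}

/-- The factor of `x` of length `n` starting at position `i`. -/
def wordSeg (x : ℕ → A) (i n : ℕ) : List A := (List.range n).map fun j => x (i + j)

/-- The set of finite factors of a one-sided infinite word (including the empty word). -/
def Fac (x : ℕ → A) : Set (List A) := {u | ∃ i n, u = wordSeg x i n}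

/-- The factor of a two-sided word `x` of length `n` starting at position `i`. -/
def wordSegZ (x : ℤ → A) (i : ℤ) (n : ℕ) : List A := (List.range n).map fun j => x (i + j)

/-- The set of finite factors of a two-sided infinite word (including the empty word). -/
def FacZ (x : ℤ → A) : Set (List A) := {u | ∃ (i : ℤ) (n : ℕ), u = wordSegZ x i n}

/-- The complexity of a language: the number of words of length `n` in it. -/
noncomputable def complexity (L : Set (List A)) (n : ℕ) : ℕ :=
  {u ∈ L | u.length = n}.ncard

/-- The accumulative complexity `p*_L(n) = Σ_{i=0}^{n} p_L(i)`. -/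
noncomputable def accComplexity (L : Set (List A)) (n : ℕ) : ℕ :=
  ∑ i ∈ Finset.range (n + 1), complexity L i

/-- Concatenation (product) of two languages. -/
def prodL (S T : Set (List A)) : Set (List A) := {w | ∃ s ∈ S, ∃ t ∈ T, w = s ++ t}

/-- `powL S k` = `S^k`, the set of concatenations of `k` elements of `S`. -/
def powL (S : Set (List A)) : ℕ → Set (List A)
  | 0 => {([] : List A)}
  | k + 1 => prodL (powL S k) S

/-- `f(n) = O(n^α)`. -/
def PolyBound (f : ℕ → ℕ) (α : ℝ) : Prop :=
  ∃ C : ℝ, ∀ n : ℕ, 1 ≤ n → (f n : ℝ) ≤ C * (n : ℝ) ^ α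

/-- The `α`-dimension `d_α(L)`: infimum of the integers `k ≥ 1` such that `L ⊆ S^k`
for some language `S` with `p_S(n) = O(n^α)`, with `inf ∅ = ⊤`. -/
noncomputable def polyDim (α : ℝ) (L : Set (List A)) : ℕ∞ :=
  sInf {k : ℕ∞ | ∃ m : ℕ, k = m ∧ 1 ≤ m ∧
    ∃ S : Set (List A), PolyBound (complexity S) α ∧ L ⊆ powL S m}

/-- The accumulative `α`-dimension `d*_α(L)`. -/
noncomputable def polyDimStar (α : ℝ) (L : Set (List A)) : ℕ∞ :=
  sInf {k : ℕ∞ | ∃ m : ℕ, k = m ∧ 1 ≤ m ∧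
    ∃ S : Set (List A), PolyBound (accComplexity S) α ∧ L ⊆ powL S m}

/-- The cost `c(L)`: infimum of the `α ≥ 0` with `d_α(L) < +∞`, with `inf ∅ = ⊤`. -/
noncomputable def cost (L : Set (List A)) : ℝ≥0∞ :=
  sInf {a : ℝ≥0∞ | ∃ α : ℝ, 0 ≤ α ∧ a = ENNReal.ofReal α ∧ polyDim α L ≠ ⊤}

/-- A one-sided word is ultimately periodic if it is of the form `u v v v ⋯`. -/
def UltimatelyPeriodic (x : ℕ → A) : Prop :=
  ∃ N p : ℕ, 0 < p ∧ ∀ n : ℕ, N ≤ n → x (n + p) = x n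

/-- A two-sided word is eventually periodic if it is periodic far enough to the right
and far enough to the left. -/
def EventuallyPeriodicZ (x : ℤ → A) : Prop :=
  (∃ p : ℕ, 0 < p ∧ ∃ N : ℤ, ∀ n : ℤ, N ≤ n → x (n + p) = x n) ∧
  (∃ p : ℕ, 0 < p ∧ ∃ N : ℤ, ∀ n : ℤ, n ≤ N → x (n - p) = x n)

/-- A one-sided word is recurrent if each of its factors occurs infinitely often. -/
def Recurrent (x : ℕ → A) : Prop :=
  ∀ u ∈ Fac x, ∀ N : ℕ, ∃ i : ℕ, N ≤ i ∧ u = wordSeg x i u.length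

/-- `u` is a right special factor for the language `F`. -/
def RightSpecial (F : Set (List A)) (u : List A) : Prop :=
  u ∈ F ∧ ∃ a b : A, a ≠ b ∧ u ++ [a] ∈ F ∧ u ++ [b] ∈ F

/-- `M` is a `D`-marker set for a word with factor set `F`: every factor of length
at least `D n` contains a factor of length `n` belonging to `M`. -/
def MarkerSet (D : ℕ) (M F : Set (List A)) : Prop :=
  ∀ n : ℕ, 1 ≤ n → ∀ u ∈ F, D * n ≤ u.length →
    ∃ v ∈ M, v.length = n ∧ v <:+: u

/-- A language is factorial if it contains all factors of its members. -/
def IsFactorial (S : Set (List A)) : Prop := ∀ u ∈ S, ∀ v : List A, v <:+: u → v ∈ S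

/-- The bound `Σ_{k ∈ I_n ∩ ℕ} p_M(2^k)(1 + 4 p(3n)/2^k)` where
`I_n = (log₂(n/(2D)), log₂(2n)]`, i.e. the sum is over natural `k` with
`n/(2D) < 2^k ≤ 2n`. -/
noncomputable def markerBound (M F : Set (List A)) (D n : ℕ) : ℝ :=
  ∑ k ∈ (Finset.range (2 * n + 2)).filter (fun k => n < 2 * D * 2 ^ k ∧ 2 ^ k ≤ 2 * n),
    (complexity M (2 ^ k) : ℝ) * (1 + 4 * (complexity F (3 * n) : ℝ) / 2 ^ k)

-- The word `u = ∏_{i=1}^{∞} a b^i = a b a b b a b b b ⋯` over `{a,b}`, with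
-- `a = false`, `b = true`: position `n` carries an `a` iff `n = (i-1)(i+2)/2` for some
-- `i ≥ 1`, i.e. iff `2n = m(m+3)` for some `m ≥ 0`.
open Classical in
noncomputable def uWord (n : ℕ) : Bool :=
  if ∃ m : ℕ, 2 * n = m * (m + 3) then false else true

section Helper
open Classical

variable {ι : Type}

/-- Generic segment along the orbit of `σ`. -/
noncomputable def gseg (σ : ι → ι) (x : ι → A) (i : ι) (n : ℕ) : List A :=
  (List.range n).map fun j => x (σ^[j] i)

theorem gseg_length (σ : ι → ι) (x : ι → A) (i : ι) (n : ℕ) :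
    (gseg σ x i n).length = n := by simp [gseg]

theorem gseg_succ (σ : ι → ι) (x : ι → A) (i : ι) (n : ℕ) :
    gseg σ x i (n + 1) = gseg σ x i n ++ [x (σ^[n] i)] := by
  simp [gseg, List.range_succ]

theorem gseg_cons (σ : ι → ι) (x : ι → A) (i : ι) (n : ℕ) :
    gseg σ x i (n + 1) = x i :: gseg σ x (σ i) n := by
  simp [gseg, List.range_succ_eq_map, Function.comp_def]

theorem gseg_take (σ : ι → ι) (x : ι → A) (i : ι) {n m : ℕ} (h : n ≤ m) :
    (gseg σ x i m).take n = gseg σ x i n := by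
  simp [gseg, ← List.map_take, List.take_range, h]

theorem gseg_infix (σ : ι → ι) (x : ι → A) (n : ℕ) (k : ℕ) : ∀ (i : ι) (m : ℕ), k + n ≤ m →
    gseg σ x (σ^[k] i) n <:+: gseg σ x i m := by
  induction k with
  | zero =>
    intro i m h
    have := gseg_take σ x i (n := n) (m := m) (by omega)
    simp only [Function.iterate_zero, id]
    rw [← this]
    exact (List.take_prefix _ _).isInfix
  | succ k ih =>
    intro i m h
    obtain ⟨m, rfl⟩ : ∃ m', m = m' + 1 := ⟨m - 1, by omega⟩
    rw [gseg_cons, Function.iterate_succ_apply]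
    exact (ih (σ i) m (by omega)).trans (List.suffix_cons _ _).isInfix

variable [Fintype A]

theorem gF_finite (σ : ι → ι) (x : ι → A) (n : ℕ) :
    (Set.range fun i => gseg σ x i n).Finite := by
  refine (List.finite_length_eq A n).subset ?_
  rintro _ ⟨i, rfl⟩
  exact gseg_length σ x i n

/-- Factors of length `n`. -/
noncomputable def gF (σ : ι → ι) (x : ι → A) (n : ℕ) : Finset (List A) :=
  (gF_finite σ x n).toFinset

theorem mem_gF {σ : ι → ι} {x : ι → A} {n : ℕ} {u : List A} :
    u ∈ gF σ x n ↔ ∃ i, gseg σ x i n = u := by simp [gF]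

/-- Right special words. -/
def gSpec (σ : ι → ι) (x : ι → A) (m : ℕ) (u : List A) : Prop :=
  ∃ i j, gseg σ x i m = u ∧ gseg σ x j m = u ∧ gseg σ x i (m + 1) ≠ gseg σ x j (m + 1)

noncomputable def gR (σ : ι → ι) (x : ι → A) (m : ℕ) : Finset (List A) :=
  (gF σ x m).filter (gSpec σ x m)

theorem card_succ (σ : ι → ι) (x : ι → A) (m : ℕ) :
    (gF σ x m).card + (gR σ x m).card ≤ (gF σ x (m + 1)).card := by
  have hmap : ∀ u ∈ gF σ x (m + 1), u.take m ∈ gF σ x m := by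
    intro u hu
    obtain ⟨i, rfl⟩ := mem_gF.1 hu
    exact mem_gF.2 ⟨i, (gseg_take σ x i (by omega)).symm⟩
  rw [Finset.card_eq_sum_card_fiberwise (f := fun u : List A => u.take m) (t := gF σ x m) hmap,
    gR, Finset.card_filter, Finset.card_eq_sum_ones, ← Finset.sum_add_distrib]
  refine Finset.sum_le_sum fun u hu => ?_
  split_ifs with h
  · obtain ⟨i, j, hi, hj, hij⟩ := h
    have : 1 < ((gF σ x (m + 1)).filter fun v => v.take m = u).card := by
      rw [Finset.one_lt_card]
      refine ⟨gseg σ x i (m + 1), ?_, gseg σ x j (m + 1), ?_, hij⟩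
      · exact Finset.mem_filter.2 ⟨mem_gF.2 ⟨i, rfl⟩, by rw [gseg_take σ x i (by omega), hi]⟩
      · exact Finset.mem_filter.2 ⟨mem_gF.2 ⟨j, rfl⟩, by rw [gseg_take σ x j (by omega), hj]⟩
    omega
  · obtain ⟨i, rfl⟩ := mem_gF.1 hu
    have : 0 < ((gF σ x (m + 1)).filter fun v => v.take m = gseg σ x i m).card := by
      rw [Finset.card_pos]
      exact ⟨gseg σ x i (m + 1),
        Finset.mem_filter.2 ⟨mem_gF.2 ⟨i, rfl⟩, gseg_take σ x i (by omega)⟩⟩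
    omega

theorem card_mono (σ : ι → ι) (x : ι → A) : Monotone fun m => (gF σ x m).card :=
  monotone_nat_of_le_succ fun m => by have := card_succ σ x m; omega

theorem card_sum (σ : ι → ι) (x : ι → A) (a b : ℕ) :
    ∑ t ∈ Finset.range b, (gR σ x (a + t)).card ≤ (gF σ x (a + b)).card := by
  induction b with
  | zero => simp
  | succ b ih =>
    rw [Finset.sum_range_succ]
    have := card_succ σ x (a + b)
    rw [← add_assoc]; omega

theorem exists_m (σ : ι → ι) (x : ι → A) (n : ℕ) (hn : 1 ≤ n) :
    ∃ m, 2 * n ≤ m ∧ m ≤ 4 * n ∧ 2 * n * (gR σ x m).card ≤ (gF σ x (4 * n)).card := by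
  by_contra! hc
  have h1 := card_sum σ x (2 * n) (2 * n)
  have h2 : ∑ t ∈ Finset.range (2 * n), (gF σ x (4 * n)).card <
      ∑ t ∈ Finset.range (2 * n), 2 * n * (gR σ x (2 * n + t)).card := by
    refine Finset.sum_lt_sum_of_nonempty (by simp; omega) fun t ht => ?_
    rw [Finset.mem_range] at ht
    exact hc _ (by omega) (by omega)
  rw [← Finset.mul_sum, Finset.sum_const, Finset.card_range, smul_eq_mul] at h2
  have h3 := lt_of_mul_lt_mul_left h2 (Nat.zero_le _)
  rw [show 2 * n + 2 * n = 4 * n by ring] at h1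
  omega

theorem step (σ : ι → ι) (x : ι → A) (m : ℕ) {i j : ι} (h : gseg σ x i m = gseg σ x j m)
    (hs : ¬ gSpec σ x m (gseg σ x i m)) : gseg σ x (σ i) m = gseg σ x (σ j) m := by
  have : gseg σ x i (m + 1) = gseg σ x j (m + 1) := by
    by_contra hne
    exact hs ⟨i, j, rfl, h.symm, hne⟩
  rw [gseg_cons, gseg_cons] at this
  exact (List.cons.inj this).2

theorem exists_spec (σ : ι → ι) (x : ι → A)
    (H : ∀ i p, 0 < p → ∃ k, x (σ^[k + p] i) ≠ x (σ^[k] i)) (m : ℕ) (hm : 1 ≤ m) (i : ι) :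
    ∃ k, gSpec σ x m (gseg σ x (σ^[k] i) m) := by
  by_contra! hc
  have hinf : ∃ a b : ℕ, a < b ∧ gseg σ x (σ^[a] i) m = gseg σ x (σ^[b] i) m := by
    have := Set.Finite.exists_lt_map_eq_of_forall_mem (t := Set.range fun i => gseg σ x i m)
      (f := fun k : ℕ => gseg σ x (σ^[k] i) m) (fun k => ⟨_, rfl⟩) (gF_finite σ x m)
    exact this
  obtain ⟨a, b, hab, he⟩ := hinf
  have hall : ∀ t, gseg σ x (σ^[t + a] i) m = gseg σ x (σ^[t + b] i) m := by
    intro t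
    induction t with
    | zero => simpa using he
    | succ t ih =>
      have := step σ x m ih (hc _)
      rw [← Function.iterate_succ_apply' σ, ← Function.iterate_succ_apply' σ] at this
      rw [show t + 1 + a = (t + a).succ by omega, show t + 1 + b = (t + b).succ by omega]
      exact this
  obtain ⟨k, hk⟩ := H (σ^[a] i) (b - a) (by omega)
  apply hk
  rw [← Function.iterate_add_apply, ← Function.iterate_add_apply]
  have := hall k
  obtain ⟨m, rfl⟩ : ∃ m', m = m' + 1 := ⟨m - 1, by omega⟩
  rw [gseg_cons, gseg_cons] at this
  rw [show k + (b - a) + a = k + b by omega]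
  exact (List.cons.inj this).1.symm

theorem core (σ : ι → ι) (x : ι → A)
    (H : ∀ i p, 0 < p → ∃ k, x (σ^[k + p] i) ≠ x (σ^[k] i)) (n : ℕ) (hn : 1 ≤ n) :
    ∃ M : Finset (List A), (∀ v ∈ M, v.length = n) ∧
      n * M.card ≤ (gF σ x (4 * n)).card ∧
      ∀ i, ∃ k ≤ 2 * n, gseg σ x (σ^[k] i) n ∈ M := by
  obtain ⟨m, hm1, hm2, hm3⟩ := exists_m σ x n hn
  have hex := exists_spec σ x H m (by omega)
  let f : ι → ℕ := fun i => Nat.find (hex i)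
  have hle : ∀ i j, gseg σ x i m = gseg σ x j m → f j ≤ f i := by
    intro i j hij
    have hall : ∀ t, t ≤ f i → gseg σ x (σ^[t] i) m = gseg σ x (σ^[t] j) m := by
      intro t
      induction t with
      | zero => intro _; simpa using hij
      | succ t ih =>
        intro ht
        have := step σ x m (ih (by omega)) (Nat.find_min (hex i) (by exact ht))
        rw [← Function.iterate_succ_apply' σ, ← Function.iterate_succ_apply' σ] at this
        exact this
    apply Nat.find_min'
    rw [← hall _ le_rfl]
    exact Nat.find_spec (hex i)
  have hf : ∀ i j, gseg σ x i m = gseg σ x j m → f i = f j := fun i j h =>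
    le_antisymm (hle _ _ h.symm) (hle _ _ h)
  have hf0 : ∀ i, f i = 0 → gseg σ x i m ∈ gR σ x m := by
    intro i hi
    have := Nat.find_spec (hex i)
    rw [show Nat.find (hex i) = 0 from hi] at this
    exact Finset.mem_filter.2 ⟨mem_gF.2 ⟨i, rfl⟩, this⟩
  have hfs : ∀ k i, k ≤ f i → f (σ^[k] i) = f i - k := by
    intro k i hk
    apply le_antisymm
    · apply Nat.find_min'
      rw [← Function.iterate_add_apply, Nat.sub_add_cancel hk]
      exact Nat.find_spec (hex i)
    · have : f i ≤ f (σ^[k] i) + k := by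
        apply Nat.find_min'
        rw [Function.iterate_add_apply]
        exact Nat.find_spec (hex (σ^[k] i))
      omega
  -- the residue classes
  let S : ℕ → Finset (List A) := fun r =>
    (gF σ x m).filter fun u => ∃ i, gseg σ x i m = u ∧ f i % (2 * n) = r
  have hS : ∃ r, r < 2 * n ∧ 2 * n * (S r).card ≤ (gF σ x m).card := by
    by_contra! hc
    have h1 : ∑ r ∈ Finset.range (2 * n), (S r).card ≤ (gF σ x m).card := by
      rw [← Finset.card_biUnion]
      · apply Finset.card_le_card
        intro u hu
        obtain ⟨r, _, hr⟩ := Finset.mem_biUnion.1 hu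
        exact (Finset.mem_filter.1 hr).1
      · intro r _ s _ hrs
        refine Finset.disjoint_left.2 ?_
        intro u hu hu'
        obtain ⟨_, i, hi, hi'⟩ := Finset.mem_filter.1 hu
        obtain ⟨_, j, hj, hj'⟩ := Finset.mem_filter.1 hu'
        apply hrs
        rw [← hi', ← hj', hf i j (hi.trans hj.symm)]
    have h2 : ∑ t ∈ Finset.range (2 * n), (gF σ x m).card <
        ∑ t ∈ Finset.range (2 * n), 2 * n * (S t).card := by
      refine Finset.sum_lt_sum_of_nonempty (by simp; omega) fun t ht => ?_
      rw [Finset.mem_range] at ht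
      exact hc _ ht
    rw [← Finset.mul_sum, Finset.sum_const, Finset.card_range, smul_eq_mul] at h2
    have h3 := lt_of_mul_lt_mul_left h2 (Nat.zero_le _)
    omega
  obtain ⟨r, hr, hrc⟩ := hS
  have hmono : (gF σ x m).card ≤ (gF σ x (4 * n)).card := card_mono σ x hm2
  refine ⟨(gR σ x m ∪ S r).image (fun u => u.take n), ?_, ?_, ?_⟩
  · intro v hv
    obtain ⟨u, hu, rfl⟩ := Finset.mem_image.1 hv
    have : u ∈ gF σ x m := by
      rcases Finset.mem_union.1 hu with h | h <;> exact (Finset.mem_filter.1 h).1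
    obtain ⟨i, rfl⟩ := mem_gF.1 this
    rw [gseg_take σ x i (by omega), gseg_length]
  · have h1 : ((gR σ x m ∪ S r).image (fun u => u.take n)).card ≤ (gR σ x m).card + (S r).card :=
      Finset.card_image_le.trans (Finset.card_union_le _ _)
    have h2 := Nat.mul_le_mul_left (2 * n) h1
    rw [mul_add] at h2
    rw [mul_assoc] at h2
    omega
  · intro i
    have key : ∀ k, gseg σ x (σ^[k] i) m ∈ gR σ x m ∪ S r →
        gseg σ x (σ^[k] i) n ∈ (gR σ x m ∪ S r).image (fun u => u.take n) := fun k hk =>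
      Finset.mem_image.2 ⟨_, hk, gseg_take σ x _ (by omega)⟩
    by_cases h : f i < 2 * n
    · refine ⟨f i, h.le, key _ (Finset.mem_union_left _ (hf0 _ ?_))⟩
      rw [hfs _ _ le_rfl, Nat.sub_self]
    · have hlt := Nat.mod_lt (f i + (2 * n - r)) (show 0 < 2 * n by omega)
      refine ⟨(f i + (2 * n - r)) % (2 * n), hlt.le, key _ (Finset.mem_union_right _ ?_)⟩
      refine Finset.mem_filter.2 ⟨mem_gF.2 ⟨_, rfl⟩, _, rfl, ?_⟩
      rw [hfs _ _ (by omega)]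
      have hd := Nat.div_add_mod (f i + (2 * n - r)) (2 * n)
      set q := (f i + (2 * n - r)) / (2 * n) with hq
      set k := (f i + (2 * n - r)) % (2 * n) with hk
      have hq1 : 1 ≤ q := by
        rw [hq, Nat.one_le_div_iff (by omega)]; omega
      obtain ⟨q', hq'⟩ : ∃ q', q = q' + 1 := ⟨q - 1, by omega⟩
      rw [hq', mul_add, mul_one] at hd
      rw [show f i - k = r + 2 * n * q' by omega, Nat.add_mul_mod_self_left, Nat.mod_eq_of_lt hr]

theorem core' (σ : ι → ι) (x : ι → A)
    (H : ∀ i p, 0 < p → ∃ k, x (σ^[k + p] i) ≠ x (σ^[k] i)) (F : Set (List A))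
    (hF : ∀ u, u ∈ F ↔ ∃ i n, u = gseg σ x i n) :
    ∃ M : Set (List A), MarkerSet 3 M F ∧
        ∀ n : ℕ, 1 ≤ n → (complexity M n : ℝ) ≤ (complexity F (4 * n) : ℝ) / n := by
  choose! M hM1 hM2 hM3 using core σ x H
  refine ⟨{v | 1 ≤ v.length ∧ v ∈ M v.length}, ?_, ?_⟩
  · intro n hn u hu hl
    obtain ⟨i, l, rfl⟩ := (hF u).1 hu
    rw [gseg_length] at hl
    obtain ⟨k, hk, hk'⟩ := hM3 n hn i
    refine ⟨_, ?_, gseg_length σ x _ n, gseg_infix σ x n k i l (by omega)⟩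
    simp only [Set.mem_setOf_eq, gseg_length]
    exact ⟨hn, hk'⟩
  · intro n hn
    have e1 : complexity {v | 1 ≤ v.length ∧ v ∈ M v.length} n = (M n).card := by
      rw [complexity, ← Set.ncard_coe_finset]
      congr 1
      ext v
      constructor
      · rintro ⟨⟨_, h⟩, h'⟩
        rw [h'] at h
        exact h
      · intro h
        have := hM1 n hn v h
        refine ⟨⟨by omega, ?_⟩, this⟩
        rw [this]; exact h
    have e2 : complexity F (4 * n) = (gF σ x (4 * n)).card := by
      rw [complexity, ← Set.ncard_coe_finset]
      congr 1
      ext v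
      rw [Set.mem_setOf_eq, hF, Finset.mem_coe, mem_gF]
      constructor
      · rintro ⟨⟨i, l, rfl⟩, h⟩
        rw [gseg_length] at h
        exact ⟨i, by rw [h]⟩
      · rintro ⟨i, rfl⟩
        exact ⟨⟨i, _, rfl⟩, gseg_length _ _ _ _⟩
    rw [e1, e2, le_div_iff₀ (by exact_mod_cast hn)]
    have := hM2 n hn
    rw [mul_comm] at this
    exact_mod_cast this

end Helper

theorem wordSegZ_eq {A : Type u} (x : ℤ → A) (i : ℤ) (n : ℕ) :
    wordSegZ x i n = (List.range n).map fun j : ℕ => x (i + (j : ℤ)) := by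
  simp [wordSegZ, Function.comp_def, List.map_eq_flatMap, List.flatMap_assoc]

theorem caseZ {A : Type u} [Fintype A] (x : ℤ → A)
    (hx : ¬ ∃ p : ℕ, 0 < p ∧ ∃ N : ℤ, ∀ n : ℤ, N ≤ n → x (n + p) = x n) :
    ∃ M : Set (List A), MarkerSet 3 M (FacZ x) ∧
        ∀ n : ℕ, 1 ≤ n →
          (complexity M n : ℝ) ≤ (complexity (FacZ x) (4 * n) : ℝ) / n := by
  have hit : ∀ (k : ℕ) (i : ℤ), (fun z : ℤ => z + 1)^[k] i = i + k := by
    intro k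
    induction k with
    | zero => simp
    | succ k ih => intro i; rw [Function.iterate_succ_apply', ih]; push_cast; ring
  refine core' (fun z : ℤ => z + 1) x ?_ _ ?_
  · intro i p hp
    by_contra! hc
    refine hx ⟨p, hp, i, fun n hn => ?_⟩
    have := hc (n - i).toNat
    rw [hit, hit] at this
    push_cast at this
    rw [Int.toNat_of_nonneg (by omega)] at this
    rw [show i + (n - i + (p : ℤ)) = n + p by ring, show i + (n - i) = n by ring] at this
    exact this
  · intro u
    simp only [FacZ, wordSegZ_eq, gseg, hit, Set.mem_setOf_eq]

theorem FacZ_reverse {A : Type u} (x : ℤ → A) {u : List A} (hu : u ∈ FacZ x) :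
    u.reverse ∈ FacZ (fun i => x (-i)) := by
  obtain ⟨i, n, rfl⟩ := hu
  refine ⟨-(i + n - 1), n, ?_⟩
  apply List.ext_getElem
  · simp [wordSegZ_eq]
  · intro k h1 h2
    simp only [wordSegZ_eq, List.length_map, List.length_range] at h2
    simp only [wordSegZ_eq, List.getElem_reverse, List.getElem_map, List.getElem_range,
      List.length_map, List.length_range]
    congr 1
    omega

theorem complexity_reverse {A : Type u} (L : Set (List A)) (n : ℕ) :
    complexity {u | u.reverse ∈ L} n = complexity L n := by
  rw [complexity, complexity, ← Set.ncard_image_of_injective _ List.reverse_injective]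
  congr 1
  ext u
  constructor
  · rintro ⟨v, ⟨h1, h2⟩, rfl⟩
    exact ⟨h1, by simpa using h2⟩
  · rintro ⟨h1, h2⟩
    exact ⟨u.reverse, ⟨by simpa using h1, by simpa using h2⟩, by simp⟩

/-- every aperiodic (one-sided or two-sided) word `x` admits a
`3`-marker set `M` with `p_M(n) ≤ p_x(4n)/n` for every `n ≥ 1`. -/
theorem stmt11 (A : Type u) [Fintype A] [Nonempty A] :
    (∀ x : ℕ → A, ¬ UltimatelyPeriodic x →
      ∃ M : Set (List A), MarkerSet 3 M (Fac x) ∧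
        ∀ n : ℕ, 1 ≤ n →
          (complexity M n : ℝ) ≤ (complexity (Fac x) (4 * n) : ℝ) / n) ∧
    (∀ x : ℤ → A, ¬ EventuallyPeriodicZ x →
      ∃ M : Set (List A), MarkerSet 3 M (FacZ x) ∧
        ∀ n : ℕ, 1 ≤ n →
          (complexity M n : ℝ) ≤ (complexity (FacZ x) (4 * n) : ℝ) / n) := by
  refine ⟨fun x hx => ?_, fun x hx => ?_⟩
  · have hit : ∀ (k i : ℕ), Nat.succ^[k] i = i + k := by
      intro k
      induction k with
      | zero => simp
      | succ k ih => intro i; rw [Function.iterate_succ_apply', ih]; omega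
    refine core' Nat.succ x ?_ _ ?_
    · intro i p hp
      by_contra! hc
      refine hx ⟨i, p, hp, fun n hn => ?_⟩
      have := hc (n - i)
      rw [hit, hit] at this
      rw [show i + (n - i + p) = n + p by omega, show i + (n - i) = n by omega] at this
      exact this
    · intro u
      simp only [Fac, wordSeg, gseg, hit, Set.mem_setOf_eq]
  · by_cases h : ∃ p : ℕ, 0 < p ∧ ∃ N : ℤ, ∀ n : ℤ, N ≤ n → x (n + p) = x n
    · obtain ⟨M, hM1, hM2⟩ := caseZ (fun i => x (-i)) (by
        rintro ⟨p, hp, N, hN⟩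
        refine hx ⟨h, p, hp, -N, fun n hn => ?_⟩
        have := hN (-n) (by omega)
        simp only [neg_neg] at this
        rw [← this]
        congr 1
        ring)
      have hF : FacZ (fun i => x (-i)) = {u | u.reverse ∈ FacZ x} := by
        ext u
        constructor
        · intro hu
          have := FacZ_reverse _ hu
          simpa using this
        · intro hu
          have := FacZ_reverse _ hu
          simpa using this
      refine ⟨{u | u.reverse ∈ M}, ?_, ?_⟩
      · intro n hn u hu hl
        obtain ⟨v, hv, hvl, hvi⟩ := hM1 n hn u.reverse (FacZ_reverse _ hu) (by simpa using hl)
        refine ⟨v.reverse, by simpa using hv, by simpa using hvl, ?_⟩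
        rw [← List.reverse_infix]
        simpa using hvi
      · intro n hn
        have := hM2 n hn
        rw [hF, complexity_reverse] at this
        rw [complexity_reverse]
        exact this
    · exact caseZ x h
end

section
/- Let y be either a two-sided infinite word over A, or a recurrent one-sided infinite word over A. Let D be a positive integer and let M be a D-marker set for y. Then there exist languages S, T ⊆ A* such that Fac(y) ⊆ S T and, for every n ≥ 2D, p_S(n) ≤ Σ_{k ∈ I_n ∩ ℕ} p_M(2^k)·(1 + 4 p_y(3n)/2^k) and p_T(n) ≤ Σ_{k ∈ I_n ∩ ℕ} p_M(2^k)·(1 + 4 p_y(3n)/2^k), where I_n is the half-open interval (log₂(n/(2D)), log₂(2n)]. -/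
open scoped ENNReal Pointwise

universe u

variable {A : Type u}

namespace MarkerProof

/-- `m` occurs in `v` at position `p`. -/
def Occ (m v : List A) (p : ℕ) : Prop := ∀ i, i < m.length → v[p + i]? = m[i]?

/-- `d` is a period of `v`. -/
def Per (v : List A) (d : ℕ) : Prop := ∀ i, i + d < v.length → v[i]? = v[i + d]?

/-- The period `d` of the occurrence of `m` at `p` breaks at most `d` letters to the left. -/
def LB (m v : List A) (d p : ℕ) : Prop :=
  ∃ i, p ≤ i + d ∧ i + d < p + m.length ∧ v[i]? ≠ v[i + d]?

/-- The period `d` of the occurrence of `m` at `p` breaks at most `d` letters to the right. -/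
def RB (m v : List A) (d p : ℕ) : Prop :=
  ∃ i, p ≤ i ∧ i < p + m.length ∧ i + d < v.length ∧ v[i]? ≠ v[i + d]?

/-- Minimal positive period. -/
noncomputable def mp (m : List A) : ℕ := sInf {d | 0 < d ∧ Per m d}

lemma mp_spec (m : List A) (hm : 0 < m.length) :
    0 < mp m ∧ Per m (mp m) ∧ mp m ≤ m.length ∧ ∀ e, 0 < e → Per m e → mp m ≤ e := by
  have h0 : m.length ∈ {d | 0 < d ∧ Per m d} := ⟨hm, fun i hi => by omega⟩
  have h1 := Nat.sInf_mem ⟨_, h0⟩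
  exact ⟨h1.1, h1.2, Nat.sInf_le h0, fun e h h' => Nat.sInf_le ⟨h, h'⟩⟩

lemma td (H : ℕ) (m r : List A) : m.take H ++ (m.drop H ++ r) = m ++ r := by
  rw [← List.append_assoc, List.take_append_drop]

lemma occ_append (x m t : List A) : Occ m (x ++ m ++ t) x.length := by
  intro i hi
  rw [List.append_assoc, List.getElem?_append_right (by omega), List.getElem?_append_left (by omega)]
  congr 1; omega

lemma Occ.decomp {m u : List A} {p : ℕ} (h : Occ m u p) (hm : 0 < m.length) :
    ∃ a b, u = a ++ m ++ b ∧ a.length = p := by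
  have hp : p + m.length ≤ u.length := by
    have := h (m.length - 1) (by omega)
    rw [List.getElem?_eq_getElem (l := m) (by omega)] at this
    have := List.getElem?_eq_some_iff.1 this
    obtain ⟨h1, _⟩ := this
    omega
  refine ⟨u.take p, u.drop (p + m.length), ?_, by simp; omega⟩
  have : m = (u.drop p).take m.length := by
    apply List.ext_getElem?
    intro i
    by_cases hi : i < m.length
    · rw [List.getElem?_take_of_lt hi, List.getElem?_drop, h i hi]
    · rw [List.getElem?_eq_none (by omega), List.getElem?_eq_none (by simp; omega)]
  conv_lhs => rw [← List.take_append_drop p u, ← List.take_append_drop m.length (u.drop p)]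
  rw [← this, List.drop_drop, List.append_assoc]

/-- Two close occurrences of `m`: their distance is at least the minimal period, and
their union is periodic. -/
lemma close {m v : List A} {H q q' : ℕ} (hm : m.length = 2 * H) (hq : Occ m v q)
    (hq' : Occ m v q') (h1 : q < q') (h2 : q' < q + H) :
    mp m ≤ q' - q ∧ ∀ i, q ≤ i → i + mp m < q' + m.length → v[i]? = v[i + mp m]? := by
  obtain ⟨s1, s2, s3, s4⟩ := mp_spec m (by omega)
  have hd : mp m ≤ q' - q := by
    apply s4 _ (by omega)
    intro i hi
    rw [← hq' i (by omega), ← hq _ hi]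
    congr 1; omega
  refine ⟨hd, fun i hi hi' => ?_⟩
  by_cases hc : i + mp m < q + m.length
  · have a1 := hq (i - q) (by omega)
    have a2 := hq (i - q + mp m) (by omega)
    have a3 := s2 (i - q) (by omega)
    rw [show q + (i - q) = i by omega] at a1
    rw [show q + (i - q + mp m) = i + mp m by omega] at a2
    rw [a1, a2, a3]
  · have a1 := hq' (i - q') (by omega)
    have a2 := hq' (i - q' + mp m) (by omega)
    have a3 := s2 (i - q') (by omega)
    rw [show q' + (i - q') = i by omega] at a1
    rw [show q' + (i - q' + mp m) = i + mp m by omega] at a2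
    rw [a1, a2, a3]

lemma uniqL {m v : List A} {H q q' : ℕ} (hm : m.length = 2 * H) (hq : Occ m v q)
    (hq' : Occ m v q') (h1 : q < q') (h2 : q' < q + H) (hb : H ≤ mp m ∨ LB m v (mp m) q') :
    False := by
  obtain ⟨c1, c2⟩ := close hm hq hq' h1 h2
  rcases hb with hb | ⟨i, i1, i2, i3⟩
  · omega
  · exact i3 (c2 i (by omega) i2)

lemma uniqR {m v : List A} {H q q' : ℕ} (hm : m.length = 2 * H) (hq : Occ m v q)
    (hq' : Occ m v q') (h1 : q < q') (h2 : q' < q + H) (hb : H ≤ mp m ∨ RB m v (mp m) q) :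
    False := by
  obtain ⟨c1, c2⟩ := close hm hq hq' h1 h2
  rcases hb with hb | ⟨i, i1, i2, i3, i4⟩
  · omega
  · exact i4 (c2 i (by omega) (by omega))

lemma count (Y V : Set (List A)) (hV : V.Finite) (hY : Y.Finite) (W : ℕ)
    (ext : List A → ℕ → List A) (Q : List A → ℕ → Prop)
    (h : ∀ s ∈ Y, ∀ j < W, ∃ v ∈ V, Q v j ∧ ext v j = s)
    (hu : ∀ v ∈ V, ∀ j j', j < j' → j' < W → Q v j → Q v j' → False) :
    Y.ncard * W ≤ V.ncard := by
  classical
  choose! f hf using h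
  have e1 : Y.ncard * W = (hY.toFinset ×ˢ Finset.range W).card := by
    rw [Finset.card_product, Finset.card_range, Set.ncard_eq_toFinset_card _ hY]
  rw [e1, Set.ncard_eq_toFinset_card _ hV]
  apply Finset.card_le_card_of_injOn (fun p => f p.1 p.2)
  · rintro ⟨s, j⟩ hp
    simp at hp
    simpa using (hf s hp.1 j hp.2).1
  · rintro ⟨s, j⟩ hp ⟨s', j'⟩ hp' heq
    simp at hp hp' heq
    obtain ⟨a1, a2, a3⟩ := hf s hp.1 j hp.2
    obtain ⟨b1, b2, b3⟩ := hf s' hp'.1 j' hp'.2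
    rw [← heq] at b1 b2 b3
    have : j = j' := by
      rcases lt_trichotomy j j' with hlt | hlt | hlt
      · exact (hu _ a1 j j' hlt hp'.2 a2 b2).elim
      · exact hlt
      · exact (hu _ a1 j' j hlt hp.2 b2 a2).elim
    subst this
    rw [← a3, ← b3]

/-- Factorial and bi-extendable languages. -/
structure Good (F : Set (List A)) : Prop where
  fac : ∀ u ∈ F, ∀ v : List A, v <:+: u → v ∈ F
  right : ∀ u ∈ F, ∃ a, u ++ [a] ∈ F
  left : ∀ u ∈ F, ∃ a, a :: u ∈ F

lemma Good.extR {F : Set (List A)} (g : Good F) (n : ℕ) :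
    ∀ u ∈ F, ∃ r, r.length = n ∧ u ++ r ∈ F := by
  induction n with
  | zero => intro u hu; exact ⟨[], rfl, by simpa using hu⟩
  | succ n ih =>
    intro u hu
    obtain ⟨a, ha⟩ := g.right u hu
    obtain ⟨r, hr, hr'⟩ := ih _ ha
    exact ⟨a :: r, by simp [hr], by simpa using hr'⟩

lemma Good.extL {F : Set (List A)} (g : Good F) (n : ℕ) :
    ∀ u ∈ F, ∃ r, r.length = n ∧ r ++ u ∈ F := by
  induction n with
  | zero => intro u hu; exact ⟨[], rfl, by simpa using hu⟩
  | succ n ih =>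
    intro u hu
    obtain ⟨a, ha⟩ := g.left u hu
    obtain ⟨r, hr, hr'⟩ := ih _ ha
    exact ⟨r ++ [a], by simp [hr], by simpa using hr'⟩

lemma Good.embed {F : Set (List A)} (g : Good F) {x m t : List A} (he : x ++ m ++ t ∈ F)
    {q N : ℕ} (h1 : x.length ≤ q) (h2 : q + m.length + t.length ≤ N) :
    ∃ l r, (l ++ (x ++ m ++ t) ++ r) ∈ F ∧ (l ++ (x ++ m ++ t) ++ r).length = N ∧
      l.length + x.length = q := by
  obtain ⟨l, hl, hl'⟩ := g.extL (q - x.length) _ he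
  obtain ⟨r, hr, hr'⟩ := g.extR (N - (q + m.length + t.length)) _ hl'
  refine ⟨l, r, hr', ?_, by omega⟩
  simp; omega

lemma shift_get (l e r : List A) {i : ℕ} (h : i < e.length) :
    (l ++ e ++ r)[l.length + i]? = e[i]? := by
  rw [List.getElem?_append_left (by simp; omega), List.getElem?_append_right (by omega)]
  congr 1; omega

lemma LB.shift {m e : List A} {d p : ℕ} (h : LB m e d p) (hp : p + m.length ≤ e.length)
    (l r : List A) : LB m (l ++ e ++ r) d (l.length + p) := by
  obtain ⟨i, h1, h2, h3⟩ := h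
  refine ⟨l.length + i, by omega, by omega, ?_⟩
  rw [add_assoc, shift_get _ _ _ (by omega), shift_get _ _ _ (by omega)]
  exact h3

lemma RB.shift {m e : List A} {d p : ℕ} (h : RB m e d p)
    (l r : List A) : RB m (l ++ e ++ r) d (l.length + p) := by
  obtain ⟨i, h1, h2, h3, h4⟩ := h
  refine ⟨l.length + i, by omega, by omega, by simp; omega, ?_⟩
  rw [add_assoc, shift_get _ _ _ (by omega), shift_get _ _ _ (by omega)]
  exact h4

lemma occ_shift (l x m t r : List A) :
    Occ m (l ++ (x ++ m ++ t) ++ r) (l.length + x.length) := by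
  have := occ_append (l ++ x) m (t ++ r)
  simpa [List.append_assoc] using this

/-! Classes of left words. -/

def S1 (F : Set (List A)) (m : List A) (H n : ℕ) : Set (List A) :=
  {s | s.length = n ∧ ∃ a, s = a ++ m.take H ∧ a ++ m ∈ F ∧ Per (a ++ m) (mp m)}

def S2 (F : Set (List A)) (m : List A) (H n : ℕ) : Set (List A) :=
  {s | s.length = n ∧ ∃ a, s = a ++ m.take H ∧ a ++ m ∈ F ∧
    (H ≤ mp m ∨ LB m (a ++ m) (mp m) a.length)}

def T1 (F : Set (List A)) (m : List A) (H n : ℕ) : Set (List A) :=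
  {t | t.length = n ∧ ∃ b, t = m.drop H ++ b ∧ m ++ b ∈ F ∧ Per (m ++ b) (mp m)}

def T2 (F : Set (List A)) (m : List A) (H n : ℕ) : Set (List A) :=
  {t | t.length = n ∧ ∃ b, t = m.drop H ++ b ∧ m ++ b ∈ F ∧
    (H ≤ mp m ∨ RB m (m ++ b) (mp m) 0)}

def T3 (F : Set (List A)) (m : List A) (H n : ℕ) : Set (List A) :=
  {t | t.length = n ∧ ∃ b, t = m.drop H ++ b ∧ mp m ≤ b.length ∧
    ∃ z, z.length ≤ mp m ∧ z ++ m ++ b ∈ F ∧ LB m (z ++ m ++ b) (mp m) z.length}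

lemma finLen [Fintype A] {P : List A → Prop} (n : ℕ) : {s : List A | s.length = n ∧ P s}.Finite :=
  (List.finite_length_eq A n).subset fun _ h => h.1

lemma finLen' [Fintype A] (F : Set (List A)) (n : ℕ) : {s ∈ F | s.length = n}.Finite :=
  (List.finite_length_eq A n).subset fun _ h => h.2

lemma card_S1 [Fintype A] (F : Set (List A)) {m : List A} {H n : ℕ} (hm : m.length = 2 * H)
    (hH : 0 < H) : (S1 F m H n).ncard ≤ 1 := by
  refine (Set.ncard_le_one (finLen n)).2 ?_
  obtain ⟨s1, s2, s3, s4⟩ := mp_spec m (by omega)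
  rintro _ ⟨h1, a, rfl, _, ha⟩ _ ⟨h2, b, rfl, _, hb⟩
  have hl : a.length = b.length := by simp at h1 h2; omega
  suffices h : ∀ k i, i + k = a.length → a[i]? = b[i]? by
    congr 1
    apply List.ext_getElem?
    intro i
    by_cases hi : i < a.length
    · exact h (a.length - i) i (by omega)
    · rw [List.getElem?_eq_none (by omega), List.getElem?_eq_none (by omega)]
  intro k
  induction k using Nat.strong_induction_on with
  | _ k ih =>
    intro i hi
    by_cases hk : k = 0
    · rw [List.getElem?_eq_none (by omega), List.getElem?_eq_none (by omega)]
    have e1 := ha i (by simp; omega)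
    have e2 := hb i (by simp; omega)
    rw [List.getElem?_append_left (by omega)] at e1 e2
    rw [e1, e2]
    by_cases hc : i + mp m < a.length
    · rw [List.getElem?_append_left (by omega), List.getElem?_append_left (by omega)]
      exact ih (k - mp m) (by omega) _ (by omega)
    · rw [List.getElem?_append_right (by omega), List.getElem?_append_right (by omega), hl]

lemma card_T1 [Fintype A] (F : Set (List A)) {m : List A} {H n : ℕ} (hm : m.length = 2 * H)
    (hH : 0 < H) : (T1 F m H n).ncard ≤ 1 := by
  refine (Set.ncard_le_one (finLen n)).2 ?_
  obtain ⟨s1, s2, s3, s4⟩ := mp_spec m (by omega)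
  rintro _ ⟨h1, a, rfl, _, ha⟩ _ ⟨h2, b, rfl, _, hb⟩
  have hl : a.length = b.length := by simp at h1 h2; omega
  suffices h : ∀ i, i < (m ++ a).length → (m ++ a)[i]? = (m ++ b)[i]? by
    have : m ++ a = m ++ b := by
      apply List.ext_getElem?
      intro i
      by_cases hi : i < (m ++ a).length
      · exact h i hi
      · rw [List.getElem?_eq_none (by omega), List.getElem?_eq_none (by simp at hi ⊢; omega)]
    rw [List.append_cancel_left this]
  intro i
  induction i using Nat.strong_induction_on with
  | _ i ih =>
    intro hi
    by_cases hc : i < m.length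
    · rw [List.getElem?_append_left (by omega), List.getElem?_append_left (by omega)]
    have e1 := ha (i - mp m) (by omega)
    have e2 := hb (i - mp m) (by simp at hi ⊢; omega)
    rw [show i - mp m + mp m = i by omega] at e1 e2
    rw [← e1, ← e2]
    exact ih _ (by omega) (by omega)

lemma card_S2 [Fintype A] {F : Set (List A)} (g : Good F) {m : List A} {H n : ℕ}
    (hm : m.length = 2 * H) (hn : H ≤ n) :
    (S2 F m H n).ncard * H ≤ complexity F (3 * n) := by
  apply count _ _ (finLen' F _) (finLen n) H (fun v j => (v.drop j).take n)
    (fun v j => Occ m v (n - H + j) ∧ (H ≤ mp m ∨ LB m v (mp m) (n - H + j)))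
  · rintro _ ⟨h1, a, rfl, h2, h3⟩ j hj
    have ha : a.length = n - H := by simp at h1; omega
    obtain ⟨l, r, k1, k2, k3⟩ := g.embed (x := a) (m := m) (t := []) (by simpa using h2)
      (q := n - H + j) (N := 3 * n) (by omega) (by simp; omega)
    refine ⟨_, ⟨k1, k2⟩, ⟨?_, ?_⟩, ?_⟩
    · rw [← k3]; exact occ_shift _ _ _ _ _
    · refine h3.imp id fun h => ?_
      rw [← k3]
      simp only [List.append_nil]
      exact h.shift (by simp) l r
    · have : l ++ (a ++ m ++ []) ++ r = l ++ ((a ++ m.take H) ++ (m.drop H ++ r)) := by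
        simp only [List.append_assoc, td, List.nil_append, List.append_nil]
      simp only [this]
      rw [List.drop_left' (by omega), List.take_left' h1]
  · rintro v - j j' h1 h2 ⟨a1, a2⟩ ⟨b1, b2⟩
    exact uniqL hm a1 b1 (by omega) (by omega) b2

lemma extT {l x m b r : List A} {c H n : ℕ} (h1 : (m.drop H ++ b).length = n)
    (hm : H ≤ m.length) (hc : l.length + x.length = c) :
    ((l ++ (x ++ m ++ b) ++ r).drop (c + H)).take n = m.drop H ++ b := by
  have : l ++ (x ++ m ++ b) ++ r = (l ++ x ++ m.take H) ++ ((m.drop H ++ b) ++ r) := by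
    simp only [List.append_assoc, td, List.nil_append, List.append_nil]
  rw [this, List.drop_left' (by simp; omega), List.take_left' h1]

lemma card_T2 [Fintype A] {F : Set (List A)} (g : Good F) {m : List A} {H n : ℕ}
    (hm : m.length = 2 * H) (hn : H ≤ n) :
    (T2 F m H n).ncard * H ≤ complexity F (3 * n) := by
  apply count _ _ (finLen' F _) (finLen n) H (fun v j => (v.drop (j + H)).take n)
    (fun v j => Occ m v j ∧ (H ≤ mp m ∨ RB m v (mp m) j))
  · rintro _ ⟨h1, b, rfl, h2, h3⟩ j hj
    have ha : b.length = n - H := by simp at h1; omega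
    obtain ⟨l, r, k1, k2, k3⟩ := g.embed (x := []) (m := m) (t := b) (by simpa using h2)
      (q := j) (N := 3 * n) (by simp) (by omega)
    refine ⟨_, ⟨k1, k2⟩, ⟨?_, ?_⟩, extT h1 (by omega) k3⟩
    · rw [← k3]; exact occ_shift _ _ _ _ _
    · refine h3.imp id fun h => ?_
      rw [← k3]
      simp only [List.nil_append]
      exact h.shift l r
  · rintro v - j j' h1 h2 ⟨a1, a2⟩ ⟨b1, b2⟩
    exact uniqR hm a1 b1 (by omega) (by omega) a2

lemma card_T3 [Fintype A] {F : Set (List A)} (g : Good F) {m : List A} {H n : ℕ}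
    (hm : m.length = 2 * H) (hn : H ≤ n) :
    (T3 F m H n).ncard * H ≤ complexity F (3 * n) := by
  apply count _ _ (finLen' F _) (finLen n) H (fun v j => (v.drop (mp m + j + H)).take n)
    (fun v j => Occ m v (mp m + j) ∧ LB m v (mp m) (mp m + j))
  · rintro _ ⟨h1, b, rfl, h0, z, hz, h2, h3⟩ j hj
    have ha : b.length = n - H := by simp at h1; omega
    obtain ⟨l, r, k1, k2, k3⟩ := g.embed (x := z) (m := m) (t := b) h2
      (q := mp m + j) (N := 3 * n) (by omega) (by omega)
    refine ⟨_, ⟨k1, k2⟩, ⟨?_, ?_⟩, extT h1 (by omega) k3⟩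
    · rw [← k3]; exact occ_shift _ _ _ _ _
    · rw [← k3]
      exact h3.shift (by simp) l r
  · rintro v - j j' h1 h2 ⟨a1, a2⟩ ⟨b1, b2⟩
    exact uniqL hm a1 b1 (by omega) (by omega) (Or.inr b2)

/-- The covering lemma. -/
lemma cover {F : Set (List A)} (g : Good F) {m u : List A} {H : ℕ} (hm : m.length = 2 * H)
    (hH : 0 < H) (hu : u ∈ F) (hmu : m <:+: u) :
    ∃ s t, u = s ++ t ∧ H ≤ s.length ∧ H ≤ t.length ∧
      (s ∈ S1 F m H s.length ∨ s ∈ S2 F m H s.length) ∧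
      (t ∈ T1 F m H t.length ∨ t ∈ T2 F m H t.length ∨ t ∈ T3 F m H t.length) := by
  obtain ⟨s1, s2, s3, s4⟩ := mp_spec m (by omega)
  have key : ∀ a b, u = a ++ m ++ b →
      (Per (a ++ m) (mp m) ∨ (H ≤ mp m ∨ LB m (a ++ m) (mp m) a.length)) →
      (Per (m ++ b) (mp m) ∨ (H ≤ mp m ∨ RB m (m ++ b) (mp m) 0) ∨
        (mp m ≤ b.length ∧ ∃ z, z.length ≤ mp m ∧ z ++ m ++ b ∈ F ∧
          LB m (z ++ m ++ b) (mp m) z.length)) →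
      ∃ s t, u = s ++ t ∧ H ≤ s.length ∧ H ≤ t.length ∧
      (s ∈ S1 F m H s.length ∨ s ∈ S2 F m H s.length) ∧
      (t ∈ T1 F m H t.length ∨ t ∈ T2 F m H t.length ∨ t ∈ T3 F m H t.length) := by
    intro a b hab hs ht
    have f1 : a ++ m ∈ F := g.fac u hu _ ⟨[], b, by simp [hab]⟩
    have f2 : m ++ b ∈ F := g.fac u hu _ ⟨a, [], by simp [hab]⟩
    refine ⟨a ++ m.take H, m.drop H ++ b, ?_, by simp; omega, by simp; omega, ?_, ?_⟩
    · rw [hab]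
      simp only [List.append_assoc, td, List.nil_append, List.append_nil]
    · exact hs.imp (fun h => ⟨rfl, a, rfl, f1, h⟩) (fun h => ⟨rfl, a, rfl, f1, h⟩)
    · rcases ht with h | h | h
      · exact Or.inl ⟨rfl, b, rfl, f2, h⟩
      · exact Or.inr (Or.inl ⟨rfl, b, rfl, f2, h⟩)
      · exact Or.inr (Or.inr ⟨rfl, b, rfl, h⟩)
  obtain ⟨a0, b0, h0⟩ := hmu
  by_cases hd : H ≤ mp m
  · exact key a0 b0 h0.symm (Or.inr (Or.inl hd)) (Or.inr (Or.inl (Or.inl hd)))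
  push Not at hd
  by_cases hA : ∃ a b, u = a ++ m ++ b ∧ LB m (a ++ m) (mp m) a.length
  · obtain ⟨a, b, hab, hL⟩ := hA
    apply key a b hab (Or.inr (Or.inr hL))
    by_cases c1 : RB m (m ++ b) (mp m) 0
    · exact Or.inr (Or.inl (Or.inr c1))
    by_cases c2 : mp m ≤ b.length
    · refine Or.inr (Or.inr ⟨c2, a.drop (a.length - mp m), by simp; omega, ?_, ?_⟩)
      · refine g.fac u hu _ ⟨a.take (a.length - mp m), [], ?_⟩
        rw [hab]
        simp only [List.append_assoc, td, List.nil_append, List.append_nil]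
      · obtain ⟨i, i1, i2, i3⟩ := hL
        set l := a.take (a.length - mp m) with hl
        have hll : l.length = a.length - mp m := by simp [hl]
        have hdl : (a.drop (a.length - mp m)).length = a.length - (a.length - mp m) := by simp
        set z := a.drop (a.length - mp m) with hz
        have haz : a = l ++ z := by simp [hl, hz]
        have e : ∀ k, k < (z ++ m).length → (a ++ m)[l.length + k]? = (z ++ m ++ b)[k]? := by
          intro k hk
          have := shift_get l (z ++ m) [] hk
          rw [List.getElem?_append_left hk, ← this, haz]
          simp
        have q1 := e (i - l.length) (by simp; omega)
        have q2 := e (i - l.length + mp m) (by simp; omega)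
        rw [show l.length + (i - l.length) = i by omega] at q1
        rw [show l.length + (i - l.length + mp m) = i + mp m by omega] at q2
        refine ⟨i - l.length, by omega, by omega, ?_⟩
        rw [← q1, ← q2]
        exact i3
    · left
      intro i hi
      by_contra hne
      exact c1 ⟨i, by omega, by simp at hi; omega, hi, hne⟩
  · push Not at hA
    have noL : ∀ a b, u = a ++ m ++ b → ∀ i, a.length ≤ i + mp m → i + mp m < a.length + m.length →
        u[i]? = u[i + mp m]? := by
      intro a b hab i h1 h2
      by_contra hne
      apply hA a b hab
      refine ⟨i, h1, h2, ?_⟩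
      rw [hab, List.getElem?_append_left (l₁ := a ++ m) (by simp; omega),
        List.getElem?_append_left (l₁ := a ++ m) (by simp; omega)] at hne
      exact hne
    have pL : ∀ n a b, u = a ++ m ++ b → a.length = n → ∀ i, i + mp m < a.length + m.length →
        u[i]? = u[i + mp m]? := by
      intro n
      induction n using Nat.strong_induction_on with
      | _ n ih =>
        intro a b hab hn i hi
        by_cases hc : a.length ≤ i + mp m
        · exact noL a b hab i hc hi
        · have ho : Occ m u (a.length - mp m) := by
            intro k hk
            rw [noL a b hab _ (by omega) (by omega), hab, ← occ_append a m b k hk]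
            congr 1; omega
          obtain ⟨a', b', hab', hl⟩ := ho.decomp (by omega)
          exact ih (a.length - mp m) (by omega) a' b' hab' hl i (by omega)
    obtain ⟨p, ⟨a, b, hab, hp⟩, hmax⟩ : ∃ p, (∃ a b, u = a ++ m ++ b ∧ a.length = p) ∧
        ∀ a b, u = a ++ m ++ b → a.length ≤ p := by
      classical
      have hb : ∀ p, (∃ a b, u = a ++ m ++ b ∧ a.length = p) → p ≤ u.length := by
        rintro p ⟨a, b, rfl, rfl⟩; simp
      have hP : ∃ a b, u = a ++ m ++ b ∧ a.length = a0.length := ⟨a0, b0, h0.symm, rfl⟩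
      refine ⟨Nat.findGreatest (fun p => ∃ a b, u = a ++ m ++ b ∧ a.length = p) u.length,
        Nat.findGreatest_spec (P := fun p => ∃ a b, u = a ++ m ++ b ∧ a.length = p) (hb _ hP) hP, ?_⟩
      intro a b hab
      have hQ : ∃ a' b', u = a' ++ m ++ b' ∧ a'.length = a.length := ⟨a, b, hab, rfl⟩
      exact Nat.le_findGreatest (hb _ hQ) hQ
    apply key a b hab
    · left
      intro i hi
      have := pL _ a b hab rfl i (by simpa using hi)
      rw [hab, List.getElem?_append_left (l₁ := a ++ m) (by simp at hi ⊢; omega),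
        List.getElem?_append_left hi] at this
      exact this
    · by_cases c1 : RB m (m ++ b) (mp m) 0
      · exact Or.inr (Or.inl (Or.inr c1))
      left
      have c1' : ∀ i, i < m.length → i + mp m < (m ++ b).length →
          (m ++ b)[i]? = (m ++ b)[i + mp m]? := by
        intro i h1 h2
        by_contra hne
        exact c1 ⟨i, by omega, by omega, h2, hne⟩
      intro i hi
      by_cases hc : i < m.length
      · exact c1' i hc hi
      exfalso
      have ho : Occ m u (a.length + mp m) := by
        intro k hk
        rw [hab, List.append_assoc, List.getElem?_append_right (by omega)]
        have := c1' k hk (by omega)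
        rw [List.getElem?_append_left hk] at this
        rw [this]
        congr 1; omega
      obtain ⟨a', b', hab', hl⟩ := ho.decomp (by omega)
      have := hmax a' b' hab'
      omega

lemma union_bound [Fintype A] (M F : Set (List A)) (D n : ℕ) (X : Set (List A))
    (Y : List A → ℕ → Set (List A))
    (hX : ∀ s ∈ X, s.length = n → ∃ k, n < 2 * D * 2 ^ k ∧ 2 ^ k ≤ 2 * n ∧
      ∃ m ∈ M, m.length = 2 ^ k ∧ s ∈ Y m k)
    (hY : ∀ k m, n < 2 * D * 2 ^ k → 2 ^ k ≤ 2 * n → m.length = 2 ^ k → (Y m k).Finite ∧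
      ((Y m k).ncard : ℝ) ≤ 1 + 4 * (complexity F (3 * n) : ℝ) / 2 ^ k) :
    (complexity X n : ℝ) ≤ markerBound M F D n := by
  classical
  set K := (Finset.range (2 * n + 2)).filter (fun k => n < 2 * D * 2 ^ k ∧ 2 ^ k ≤ 2 * n) with hK
  let Ms : ℕ → Finset (List A) := fun k => (finLen' M (2 ^ k)).toFinset
  let Yf : List A → ℕ → Finset (List A) := fun m k =>
    if h : (Y m k).Finite then h.toFinset else ∅
  have h1 : complexity X n ≤ (K.biUnion fun k => (Ms k).biUnion fun m => Yf m k).card := by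
    unfold complexity
    rw [← Set.ncard_coe_finset]
    apply Set.ncard_le_ncard _ (Finset.finite_toSet _)
    rintro s ⟨hs, hl⟩
    obtain ⟨k, k1, k2, m, hm, hml, hs'⟩ := hX s hs hl
    simp only [Finset.coe_biUnion, Set.mem_iUnion, Finset.mem_coe]
    refine ⟨k, ?_, m, ?_, ?_⟩
    · simp only [hK, Finset.mem_filter, Finset.mem_range]
      have := Nat.lt_two_pow_self (n := k)
      exact ⟨by omega, k1, k2⟩
    · simp [Ms, hm, hml]
    · have := (hY k m k1 k2 hml).1
      simp [Yf, this, hs']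
  have h2 : (K.biUnion fun k => (Ms k).biUnion fun m => Yf m k).card ≤
      ∑ k ∈ K, ∑ m ∈ Ms k, (Yf m k).card :=
    Finset.card_biUnion_le.trans (Finset.sum_le_sum fun k _ => Finset.card_biUnion_le)
  have h3 : (complexity X n : ℝ) ≤ ∑ k ∈ K, ∑ m ∈ Ms k, ((Yf m k).card : ℝ) := by
    exact_mod_cast h1.trans h2
  refine h3.trans ?_
  unfold markerBound
  apply Finset.sum_le_sum
  intro k hk
  simp only [hK, Finset.mem_filter, Finset.mem_range] at hk
  have h4 : complexity M (2 ^ k) = (Ms k).card := Set.ncard_eq_toFinset_card _ _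
  rw [h4, ← nsmul_eq_mul]
  apply Finset.sum_le_card_nsmul
  intro m hm
  simp [Ms] at hm
  obtain ⟨f1, f2⟩ := hY k m hk.2.1 hk.2.2 hm.2
  simp only [Yf, f1, dif_pos]
  rwa [← Set.ncard_eq_toFinset_card _ f1]

lemma arith {a b c H p : ℕ} {P : ℝ} (hP : P = 2 * H) (hH : 0 < H) (ha : a ≤ 1) (hb : b * H ≤ p)
    (hc : c * H ≤ p) : ((a + b + c : ℕ) : ℝ) ≤ 1 + 4 * (p : ℝ) / P := by
  have hH' : (0 : ℝ) < H := by exact_mod_cast hH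
  have e1 : (b : ℝ) ≤ p / H := by rw [le_div_iff₀ hH']; exact_mod_cast hb
  have e2 : (c : ℝ) ≤ p / H := by rw [le_div_iff₀ hH']; exact_mod_cast hc
  have e3 : (a : ℝ) ≤ 1 := by exact_mod_cast ha
  have e4 : 4 * (p : ℝ) / P = p / H + p / H := by rw [hP]; field_simp; ring
  push_cast
  linarith

lemma main [Fintype A] {F : Set (List A)} (g : Good F) {D : ℕ} (hD : 0 < D) (M : Set (List A))
    (hM : MarkerSet D M F) :
    ∃ S T : Set (List A), F ⊆ prodL S T ∧
        ∀ n : ℕ, 2 * D ≤ n →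
          (complexity S n : ℝ) ≤ markerBound M F D n ∧
          (complexity T n : ℝ) ≤ markerBound M F D n := by
  let YS : ℕ → List A → ℕ → Set (List A) := fun n m k =>
    S1 F m (2 ^ k / 2) n ∪ S2 F m (2 ^ k / 2) n
  let YT : ℕ → List A → ℕ → Set (List A) := fun n m k =>
    T1 F m (2 ^ k / 2) n ∪ T2 F m (2 ^ k / 2) n ∪ T3 F m (2 ^ k / 2) n
  let mk : (ℕ → List A → ℕ → Set (List A)) → Set (List A) := fun Y =>
    {s | s.length < 2 * D ∨ ∃ k, s.length < 2 * D * 2 ^ k ∧ 2 ^ k ≤ 2 * s.length ∧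
      ∃ m ∈ M, m.length = 2 ^ k ∧ s ∈ Y s.length m k}
  have half : ∀ n k, 2 * D ≤ n → n < 2 * D * 2 ^ k → 2 ^ k ≤ 2 * n →
      2 ^ k = 2 * (2 ^ k / 2) ∧ 0 < 2 ^ k / 2 ∧ 2 ^ k / 2 ≤ n := by
    intro n k h1 h2 h3
    rcases k with _ | k
    · simp at h2; omega
    · have : 0 < 2 ^ k := by positivity
      rw [pow_succ] at *
      omega
  refine ⟨mk YS, mk YT, ?_, fun n hn => ⟨?_, ?_⟩⟩
  · intro u hu
    by_cases hl : u.length < 2 * D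
    · exact ⟨u, Or.inl hl, [], Or.inl (by simp; omega), by simp⟩
    push Not at hl
    obtain ⟨k, k1, k2⟩ : ∃ k, D * 2 ^ k ≤ u.length ∧ u.length < D * 2 ^ (k + 1) := by
      have hq : u.length / D ≠ 0 := by
        have := Nat.div_pos (a := u.length) (b := D) (by omega) hD
        omega
      refine ⟨Nat.log 2 (u.length / D), ?_, ?_⟩
      · have := Nat.pow_log_le_self 2 hq
        rw [mul_comm]
        exact (Nat.le_div_iff_mul_le hD).1 this
      · have := Nat.lt_pow_succ_log_self (b := 2) (by norm_num) (u.length / D)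
        rw [mul_comm]
        exact (Nat.div_lt_iff_lt_mul hD).1 this
    have k2' : u.length < 2 * D * 2 ^ k := by rw [pow_succ] at k2; linarith
    obtain ⟨m, hmM, hml, hmu⟩ := hM (2 ^ k) (Nat.one_le_two_pow) u hu k1
    have hk3 : 2 ^ k ≤ 2 * u.length := by rw [← hml]; have := hmu.length_le; omega
    obtain ⟨e1, e2, e3⟩ := half _ k hl k2' hk3
    obtain ⟨s, t, hst, hs, ht, hs', ht'⟩ := cover g (H := 2 ^ k / 2) (hml.trans e1) e2 hu hmu
    have hlen : u.length = s.length + t.length := by rw [hst]; simp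
    refine ⟨s, Or.inr ⟨k, by omega, by omega, m, hmM, hml, hs'⟩,
      t, Or.inr ⟨k, by omega, by omega, m, hmM, hml, ?_⟩, hst⟩
    rcases ht' with h | h | h
    · exact Or.inl (Or.inl h)
    · exact Or.inl (Or.inr h)
    · exact Or.inr h
  · apply union_bound M F D n _ (YS n)
    · rintro s (hs | ⟨k, k1, k2, m, hm, hml, hs⟩) hl
      · omega
      · subst hl; exact ⟨k, k1, k2, m, hm, hml, hs⟩
    · intro k m k1 k2 hml
      obtain ⟨e1, e2, e3⟩ := half _ k hn k1 k2
      refine ⟨(finLen n).union (finLen n), ?_⟩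
      refine le_trans ?_ (arith (H := 2 ^ k / 2) (by exact_mod_cast e1) e2
        (card_S1 F (n := n) (hml.trans e1) e2) (card_S2 g (n := n) (hml.trans e1) e3)
        (c := 0) (by omega))
      exact_mod_cast Set.ncard_union_le _ _
  · apply union_bound M F D n _ (YT n)
    · rintro s (hs | ⟨k, k1, k2, m, hm, hml, hs⟩) hl
      · omega
      · subst hl; exact ⟨k, k1, k2, m, hm, hml, hs⟩
    · intro k m k1 k2 hml
      obtain ⟨e1, e2, e3⟩ := half _ k hn k1 k2
      refine ⟨((finLen n).union (finLen n)).union (finLen n), ?_⟩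
      refine le_trans ?_ (arith (H := 2 ^ k / 2) (by exact_mod_cast e1) e2
        (card_T1 F (n := n) (hml.trans e1) e2) (card_T2 g (n := n) (hml.trans e1) e3)
        (card_T3 g (n := n) (hml.trans e1) e3))
      exact_mod_cast (Set.ncard_union_le _ _).trans
        (Nat.add_le_add_right (Set.ncard_union_le _ _) _)

lemma seg_add (y : ℕ → A) (i a b : ℕ) :
    wordSeg y i (a + b) = wordSeg y i a ++ wordSeg y (i + a) b := by
  simp [wordSeg, List.range_add, Function.comp_def, add_assoc]

lemma segZ_eq (y : ℤ → A) (i : ℤ) (n : ℕ) :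
    wordSegZ y i n = (List.range n).map fun j : ℕ => y (i + (j : ℤ)) := by
  simp only [wordSegZ]
  induction List.range n with
  | nil => rfl
  | cons a l ih => simpa using ih

lemma segZ_add (y : ℤ → A) (i : ℤ) (a b : ℕ) :
    wordSegZ y i (a + b) = wordSegZ y i a ++ wordSegZ y (i + a) b := by
  simp [segZ_eq, List.range_add, Function.comp_def, add_assoc]

lemma goodZ (y : ℤ → A) : Good (FacZ y) where
  fac := by
    rintro _ ⟨i, n, rfl⟩ v ⟨a, b, h⟩
    have hn : n = a.length + (v.length + b.length) := by
      have := congrArg List.length h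
      simp [segZ_eq] at this; omega
    rw [hn, segZ_add, segZ_add, List.append_assoc] at h
    have h1 := List.append_inj h (by simp [segZ_eq])
    have h2 := List.append_inj h1.2 (by simp [segZ_eq])
    exact ⟨_, _, h2.1⟩
  right := by
    rintro _ ⟨i, n, rfl⟩
    exact ⟨y (i + n), i, n + 1, by rw [segZ_add]; simp [segZ_eq]⟩
  left := by
    rintro _ ⟨i, n, rfl⟩
    exact ⟨y (i - 1), i - 1, 1 + n, by rw [segZ_add]; simp [segZ_eq]⟩

lemma goodN (y : ℕ → A) (hy : Recurrent y) : Good (Fac y) where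
  fac := by
    rintro _ ⟨i, n, rfl⟩ v ⟨a, b, h⟩
    have hn : n = a.length + (v.length + b.length) := by
      have := congrArg List.length h
      simp [wordSeg] at this; omega
    rw [hn, seg_add, seg_add, List.append_assoc] at h
    have h1 := List.append_inj h (by simp [wordSeg])
    have h2 := List.append_inj h1.2 (by simp [wordSeg])
    exact ⟨_, _, h2.1⟩
  right := by
    rintro _ ⟨i, n, rfl⟩
    exact ⟨y (i + n), i, n + 1, by rw [seg_add]; simp [wordSeg]⟩
  left := by
    intro u hu
    obtain ⟨i, hi, h⟩ := hy u hu 1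
    refine ⟨y (i - 1), i - 1, 1 + u.length, ?_⟩
    rw [seg_add, Nat.sub_add_cancel hi, ← h]
    simp [wordSeg]

end MarkerProof

/-- for `y` a two-sided word, or a recurrent one-sided word, and `M` a
`D`-marker set for `y`, there are `S, T` with `Fac(y) ⊆ S T` and, for `n ≥ 2D`,
`p_S(n), p_T(n) ≤ Σ_{k ∈ I_n ∩ ℕ} p_M(2^k)(1 + 4 p_y(3n)/2^k)`,
`I_n = (log₂(n/(2D)), log₂(2n)]`. -/
theorem stmt12 (A : Type u) [Fintype A] [Nonempty A] (D : ℕ) (hD : 0 < D) :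
    (∀ (y : ℤ → A) (M : Set (List A)), MarkerSet D M (FacZ y) →
      ∃ S T : Set (List A), FacZ y ⊆ prodL S T ∧
        ∀ n : ℕ, 2 * D ≤ n →
          (complexity S n : ℝ) ≤ markerBound M (FacZ y) D n ∧
          (complexity T n : ℝ) ≤ markerBound M (FacZ y) D n) ∧
    (∀ y : ℕ → A, Recurrent y → ∀ M : Set (List A), MarkerSet D M (Fac y) →
      ∃ S T : Set (List A), Fac y ⊆ prodL S T ∧
        ∀ n : ℕ, 2 * D ≤ n →
          (complexity S n : ℝ) ≤ markerBound M (Fac y) D n ∧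
          (complexity T n : ℝ) ≤ markerBound M (Fac y) D n) := by
  exact ⟨fun y M hM => MarkerProof.main (MarkerProof.goodZ y) hD M hM,
    fun y hy M hM => MarkerProof.main (MarkerProof.goodN y hy) hD M hM⟩
end

section
/- Let x be a one-sided infinite word over a finite nonempty alphabet A. Then d_0(x) = 2 if and only if p_x(n) = Θ(n). In particular, every infinite word of complexity O(n) has cost c(x) = 0. -/
open scoped ENNReal Pointwise

universe u

variable {A : Type u}

section Helpers

lemma wordSeg_length (x : ℕ → A) (i n : ℕ) : (wordSeg x i n).length = n := by
  simp [wordSeg]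

lemma wordSeg_eq_iff (x : ℕ → A) (i j n : ℕ) :
    wordSeg x i n = wordSeg x j n ↔ ∀ t < n, x (i + t) = x (j + t) := by
  simp [wordSeg]

lemma wordSeg_append (x : ℕ → A) (i m n : ℕ) :
    wordSeg x i m ++ wordSeg x (i + m) n = wordSeg x i (m + n) := by
  simp [wordSeg, List.range_add, Function.comp_def, Nat.add_assoc]

lemma finite_len [Fintype A] (S : Set (List A)) (n : ℕ) : {u ∈ S | u.length = n}.Finite :=
  (List.finite_length_eq A n).subset fun _ h => h.2

lemma complexity_mono [Fintype A] {S T : Set (List A)} (h : S ⊆ T) (n : ℕ) :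
    complexity S n ≤ complexity T n :=
  Set.ncard_le_ncard (fun _ hu => ⟨h hu.1, hu.2⟩) (finite_len T n)

/-- a set of naturals in a window of length `W`, pairwise `h`-separated -/
lemma sparse_card (P : ℕ → Prop) (h W a : ℕ) (hh : 1 ≤ h)
    (sp : ∀ i j, P i → P j → i < j → i + h ≤ j) (s : Finset ℕ)
    (hs : ∀ i ∈ s, a ≤ i ∧ i < a + W ∧ P i) : s.card ≤ W / h + 1 := by
  have : s.card ≤ (Finset.range (W / h + 1)).card := by
    apply Finset.card_le_card_of_injOn (fun i => (i - a) / h)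
    · intro i hi
      have := hs i hi
      simp only [Finset.coe_range, Set.mem_Iio]
      have : (i - a) / h ≤ W / h := Nat.div_le_div_right (by omega)
      omega
    · have key : ∀ i ∈ s, ∀ j ∈ s, i < j → (i - a) / h ≠ (j - a) / h := by
        intro i hi j hj hij he
        have h1 := hs i hi
        have h2 := hs j hj
        have h3 := sp i j h1.2.2 h2.2.2 hij
        have h4 : (i - a + h) / h ≤ (j - a) / h := Nat.div_le_div_right (by omega)
        rw [Nat.add_div_right _ (by omega)] at h4
        omega
      intro i hi j hj he
      rcases lt_trichotomy i j with h1 | h1 | h1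
      · exact absurd he (key i hi j hj h1)
      · exact h1
      · exact absurd he.symm (key j hj i hi h1)
  simpa using this

lemma count_lemma [Fintype A] (x : ℕ → A) (P : ℕ → Prop) (W h K : ℕ) (hh : 1 ≤ h) (hW : 1 ≤ W)
    (sp : ∀ i j, P i → P j → i < j → i + h ≤ j)
    (loc : ∀ i j, W ≤ i → W ≤ j → (∀ t < 2 * W, x (i - W + t) = x (j - W + t)) → P i → P j)
    (f : ℕ → List A)
    (hf : ∀ i j, W ≤ i → W ≤ j → (∀ t < 2 * W, x (i - W + t) = x (j - W + t)) → f i = f j)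
    (hp : complexity (Fac x) (3 * W) ≤ K * W) (n : ℕ) (hlen : ∀ i, (f i).length = n) :
    {w | ∃ i, P i ∧ w = f i}.ncard ≤ K * (W / h + 1) + (2 * W / h + 1) := by
  classical
  have hfin : ∀ Q : ℕ → Prop, {w | ∃ i, Q i ∧ w = f i}.Finite := by
    intro Q
    apply (List.finite_length_eq A n).subset
    rintro w ⟨i, _, rfl⟩
    exact hlen i
  have hsub : {w | ∃ i, P i ∧ w = f i} ⊆
      {w | ∃ i, (P i ∧ 2 * W ≤ i) ∧ w = f i} ∪ {w | ∃ i, (P i ∧ i < 2 * W) ∧ w = f i} := by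
    rintro w ⟨i, hi, rfl⟩
    rcases Nat.lt_or_ge i (2 * W) with h1 | h1
    · exact Or.inr ⟨i, ⟨hi, h1⟩, rfl⟩
    · exact Or.inl ⟨i, ⟨hi, h1⟩, rfl⟩
  refine (Set.ncard_le_ncard hsub ((hfin _).union (hfin _))).trans ?_
  refine (Set.ncard_union_le _ _).trans ?_
  apply Nat.add_le_add
  · -- far positions
    set T := {w | ∃ i, (P i ∧ 2 * W ≤ i) ∧ w = f i} with hT
    have hTf : T.Finite := hfin _
    have hch : ∀ w ∈ T, ∃ i, (P i ∧ 2 * W ≤ i) ∧ w = f i := fun w hw => hw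
    choose! g hg using hch
    set Z : Finset (List A) := (finite_len (Fac x) (3 * W)).toFinset with hZ
    have hZc : Z.card = complexity (Fac x) (3 * W) := by
      rw [complexity, Set.ncard_eq_toFinset_card _ (finite_len (Fac x) (3 * W))]
    set I : Finset (List A × ℕ) := hTf.toFinset ×ˢ Finset.range W with hI
    have hcard := Finset.card_le_mul_card_image_of_maps_to (s := I) (t := Z)
      (f := fun p => wordSeg x (g p.1 - W - p.2) (3 * W))
      (fun p _ => by
        rw [hZ, Set.Finite.mem_toFinset]
        exact ⟨⟨_, _, rfl⟩, wordSeg_length _ _ _⟩) (W / h + 1) (by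
        intro z hz
        rcases Finset.eq_empty_or_nonempty
          (I.filter fun p => wordSeg x (g p.1 - W - p.2) (3 * W) = z) with he | ⟨p0, hp0⟩
        · rw [he]; simp
        · set j := g p0.1 - W - p0.2 with hj
          have hz0 : wordSeg x j (3 * W) = z := (Finset.mem_filter.1 hp0).2
          have hmem : ∀ p ∈ I.filter (fun p => wordSeg x (g p.1 - W - p.2) (3 * W) = z),
              p.1 ∈ T ∧ p.2 < W ∧ (∀ t < 2 * W, x (g p.1 - W + t) = x (j + W + p.2 - W + t)) := by
            intro p hp
            obtain ⟨h1, h2⟩ := Finset.mem_filter.1 hp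
            obtain ⟨h3, h4⟩ := Finset.mem_product.1 h1
            have h5 : p.1 ∈ T := by simpa using h3
            have h6 : p.2 < W := by simpa using h4
            refine ⟨h5, h6, ?_⟩
            intro t ht
            rw [← hz0, wordSeg_eq_iff] at h2
            have h7 := h2 (p.2 + t) (by omega)
            have h8 := (hg _ h5).1.2
            rw [show g p.1 - W + t = g p.1 - W - p.2 + (p.2 + t) by omega, h7]
            congr 1; omega
          have hinj : Set.InjOn (fun p : List A × ℕ => j + W + p.2)
              (I.filter fun p => wordSeg x (g p.1 - W - p.2) (3 * W) = z : Finset (List A × ℕ)) := by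
            intro p hp p' hp' he
            have h1 := hmem p hp
            have h2 := hmem p' hp'
            have he' : p.2 = p'.2 := by simp only at he; omega
            have : f (g p.1) = f (g p'.1) := by
              apply hf
              · have := (hg _ h1.1).1.2; omega
              · have := (hg _ h2.1).1.2; omega
              · intro t ht
                rw [h1.2.2 t ht, h2.2.2 t ht, he']
            rw [← (hg _ h1.1).2, ← (hg _ h2.1).2] at this
            exact Prod.ext this he'
          rw [← Finset.card_image_of_injOn hinj]
          apply sparse_card P h W (j + W) hh sp
          intro i hi
          obtain ⟨p, hp, rfl⟩ := Finset.mem_image.1 hi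
          have h1 := hmem p hp
          refine ⟨by simp, by have := h1.2.1; omega, ?_⟩
          refine loc (g p.1) _ ?_ ?_ h1.2.2 (hg _ h1.1).1.1
          · have := (hg _ h1.1).1.2; omega
          · omega)
    rw [hI, Finset.card_product, Finset.card_range, hZc, ← Set.ncard_eq_toFinset_card _ hTf] at hcard
    have : T.ncard * W ≤ (K * (W / h + 1)) * W := by
      calc _ ≤ _ := hcard
        _ ≤ (W / h + 1) * (K * W) := Nat.mul_le_mul_left _ hp
        _ = _ := by ring
    exact Nat.le_of_mul_le_mul_right this (by omega)
  · -- near positions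
    have : {w | ∃ i, (P i ∧ i < 2 * W) ∧ w = f i} ⊆
        (((Finset.range (2 * W)).filter P).image f : Finset (List A)) := by
      rintro w ⟨i, ⟨h1, h2⟩, rfl⟩
      simp only [Finset.coe_image, Set.mem_image]
      exact ⟨i, by simp [h1, h2], rfl⟩
    refine (Set.ncard_le_ncard this (Finset.finite_toSet _)).trans ?_
    rw [Set.ncard_coe_finset]
    refine Finset.card_image_le.trans ?_
    apply sparse_card P h (2 * W) 0 hh sp
    intro i hi
    have := Finset.mem_filter.1 hi
    simp at this
    exact ⟨by omega, by omega, this.2⟩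

lemma periodic_bounded [Fintype A] (x : ℕ → A) (h : UltimatelyPeriodic x) :
    ∃ B : ℕ, ∀ n, complexity (Fac x) n ≤ B := by
  classical
  obtain ⟨N, p, hp, hx⟩ := h
  refine ⟨N + p, fun n => ?_⟩
  have key : ∀ i, ∃ j < N + p, wordSeg x i n = wordSeg x j n := by
    intro i
    induction i using Nat.strong_induction_on with
    | _ i ih =>
      by_cases hi : i < N + p
      · exact ⟨i, hi, rfl⟩
      · obtain ⟨j, hj, he⟩ := ih (i - p) (by omega)
        refine ⟨j, hj, ?_⟩
        rw [← he, wordSeg_eq_iff]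
        intro t _
        rw [← hx (i - p + t) (by omega)]
        congr 1; omega
  have : {u ∈ Fac x | u.length = n} ⊆
      ((Finset.range (N + p)).image (fun i => wordSeg x i n) : Finset (List A)) := by
    rintro u ⟨⟨i, n', rfl⟩, hu⟩
    rw [wordSeg_length] at hu
    subst hu
    obtain ⟨j, hj, he⟩ := key i
    rw [he]
    simp only [Finset.coe_image, Set.mem_image]
    exact ⟨j, by simpa using hj, rfl⟩
  refine (Set.ncard_le_ncard this (Finset.finite_toSet _)).trans ?_
  rw [Set.ncard_coe_finset]
  exact Finset.card_image_le.trans (by simp)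

/-- Markers: representatives of right special words. -/
lemma marker_lemma [Fintype A] (x : ℕ → A) (hx : ¬ UltimatelyPeriodic x) (m b : ℕ)
    (hb : complexity (Fac x) (m + 1) ≤ complexity (Fac x) m + b) :
    ∃ R : Finset ℕ, R.card ≤ b ∧ ∀ a, ∃ i, a ≤ i ∧ i ≤ a + complexity (Fac x) m ∧
      ∃ ρ ∈ R, ∀ t < m, x (ρ + t) = x (i + t) := by
  classical
  set F0 : Finset (List A) := (finite_len (Fac x) m).toFinset with hF0
  set F1 : Finset (List A) := (finite_len (Fac x) (m + 1)).toFinset with hF1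
  have c0 : complexity (Fac x) m = F0.card := by
    rw [complexity, Set.ncard_eq_toFinset_card _ (finite_len (Fac x) m)]
  have c1 : complexity (Fac x) (m + 1) = F1.card := by
    rw [complexity, Set.ncard_eq_toFinset_card _ (finite_len (Fac x) (m + 1))]
  have m0 : ∀ i, wordSeg x i m ∈ F0 := fun i => by
    rw [hF0, Set.Finite.mem_toFinset]; exact ⟨⟨_, _, rfl⟩, wordSeg_length _ _ _⟩
  have m1 : ∀ i, wordSeg x i (m + 1) ∈ F1 := fun i => by
    rw [hF1, Set.Finite.mem_toFinset]; exact ⟨⟨_, _, rfl⟩, wordSeg_length _ _ _⟩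
  have r0 : ∀ w ∈ F0, ∃ i, wordSeg x i m = w := by
    intro w hw
    rw [hF0, Set.Finite.mem_toFinset] at hw
    obtain ⟨⟨i, n, rfl⟩, h⟩ := hw
    rw [wordSeg_length] at h
    exact ⟨i, by rw [h]⟩
  have r1 : ∀ w ∈ F1, ∃ i, wordSeg x i (m + 1) = w := by
    intro w hw
    rw [hF1, Set.Finite.mem_toFinset] at hw
    obtain ⟨⟨i, n, rfl⟩, h⟩ := hw
    rw [wordSeg_length] at h
    exact ⟨i, by rw [h]⟩
  choose! pos hpos using r0
  choose! pos1 hpos1 using r1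
  set e : List A → List A := fun w => wordSeg x (pos w) (m + 1) with he
  have einj : Set.InjOn e F0 := by
    intro w hw w' hw' h
    rw [he] at h
    simp only [wordSeg_eq_iff] at h
    rw [← hpos w hw, ← hpos w' hw', wordSeg_eq_iff]
    exact fun t ht => h t (by omega)
  set D : Finset (List A) := F1 \ F0.image e with hD
  have hDc : D.card ≤ b := by
    have hsub : F0.image e ⊆ F1 := by
      intro w hw
      obtain ⟨w', _, rfl⟩ := Finset.mem_image.1 hw
      exact m1 _
    rw [hD, Finset.card_sdiff_of_subset hsub, Finset.card_image_of_injOn einj]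
    omega
  refine ⟨D.image pos1, Finset.card_image_le.trans hDc, ?_⟩
  by_contra hcon
  push Not at hcon
  obtain ⟨a, ha⟩ := hcon
  apply hx
  -- non-marker property
  let NM : ℕ → Prop := fun i => ∀ ρ ∈ D.image pos1, ∃ t < m, x (ρ + t) ≠ x (i + t)
  have nm_ext : ∀ i j, NM i → (∀ t < m, x (i + t) = x (j + t)) →
      ∀ t < m + 1, x (i + t) = x (j + t) := by
    have aux : ∀ i, NM i → wordSeg x i (m + 1) = e (wordSeg x i m) := by
      intro i hi
      by_contra hne
      have hmem : wordSeg x i (m + 1) ∈ D := by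
        rw [hD, Finset.mem_sdiff]
        refine ⟨m1 i, ?_⟩
        intro h
        obtain ⟨w, hw, h2⟩ := Finset.mem_image.1 h
        have : w = wordSeg x i m := by
          rw [← hpos w hw, wordSeg_eq_iff]
          rw [he] at h2
          simp only [wordSeg_eq_iff] at h2
          exact fun t ht => h2 t (by omega)
        rw [this] at h2
        exact hne h2.symm
      obtain ⟨t, ht, h3⟩ := hi _ (Finset.mem_image_of_mem pos1 hmem)
      have h4 := hpos1 _ (Finset.mem_sdiff.1 hmem).1
      rw [wordSeg_eq_iff] at h4
      exact h3 (h4 t (by omega))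
    intro i j hi hij
    have hj : NM j := by
      intro ρ hρ
      obtain ⟨t, ht, h⟩ := hi ρ hρ
      exact ⟨t, ht, by rwa [← hij t ht]⟩
    rw [← wordSeg_eq_iff, aux i hi, aux j hj, (wordSeg_eq_iff x i j m).2 hij]
  have hNM : ∀ i, a ≤ i → i ≤ a + complexity (Fac x) m → NM i := ha
  obtain ⟨i, hi, j, hj, hij, hw⟩ : ∃ i ∈ Finset.Icc a (a + complexity (Fac x) m),
      ∃ j ∈ Finset.Icc a (a + complexity (Fac x) m), i ≠ j ∧ wordSeg x i m = wordSeg x j m := by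
    apply Finset.exists_ne_map_eq_of_card_lt_of_maps_to (t := F0)
    · simp; omega
    · intro i _; exact m0 i
  wlog hlt : i < j generalizing i j
  · exact this j hj i hi hij.symm hw.symm (by omega)
  simp only [Finset.mem_Icc] at hi hj
  rw [wordSeg_eq_iff] at hw
  have Q : ∀ t, (∀ s < m, x (i + t + s) = x (j + t + s)) ∧ NM (i + t) := by
    intro t
    induction t using Nat.strong_induction_on with
    | _ t ih =>
      have h1 : ∀ s < m, x (i + t + s) = x (j + t + s) := by
        rcases t with _ | t
        · simpa using hw
        · obtain ⟨h2, h3⟩ := ih t (by omega)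
          intro s hs
          have := nm_ext _ _ h3 h2 (s + 1) (by omega)
          rw [show i + (t + 1) + s = i + t + (s + 1) by omega, this]
          congr 1; omega
      refine ⟨h1, ?_⟩
      by_cases hd : i + t < j
      · exact hNM _ (by omega) (by omega)
      · obtain ⟨h2, h3⟩ := ih (t - (j - i)) (by omega)
        intro ρ hρ
        obtain ⟨s, hs, h4⟩ := h3 ρ hρ
        refine ⟨s, hs, ?_⟩
        rw [h2 s hs] at h4
        rwa [show j + (t - (j - i)) + s = i + t + s by omega] at h4
  refine ⟨i, j - i, by omega, fun n hn => ?_⟩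
  obtain ⟨h2, h3⟩ := Q (n - i)
  have := nm_ext _ _ h3 h2 0 (by omega)
  rw [show n + (j - i) = j + (n - i) + 0 by omega, ← this]
  congr 1; omega

lemma core_lemma [Fintype A] (x : ℕ → A) (m h W K ρ Nmax : ℕ) (hm : 2 ≤ m) (hh : h = m / 2)
    (hW : Nmax + h ≤ W) (hW2 : 2 * m ≤ W)
    (hp : complexity (Fac x) (3 * W) ≤ K * W) :
    ∃ S : Set (List A),
      (∀ n ≤ Nmax, complexity S n ≤ 4 * (K * (W / h + 1) + (2 * W / h + 1)) + 2) ∧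
      ∀ a N i, N ≤ Nmax → a ≤ i → i + m ≤ a + N → (∀ t < m, x (ρ + t) = x (i + t)) →
        ∃ c, a + h ≤ c ∧ c + h ≤ a + N ∧ wordSeg x a (c - a) ∈ S ∧
          wordSeg x c (a + N - c) ∈ S := by
  classical
  -- the minimal period
  have hex : ∃ q, 1 ≤ q ∧ ∀ t, t + q < m → x (ρ + t) = x (ρ + t + q) :=
    ⟨m, by omega, fun t ht => by omega⟩
  obtain ⟨q, ⟨hq1, hqp⟩, hqmin⟩ : ∃ q, (1 ≤ q ∧ ∀ t, t + q < m → x (ρ + t) = x (ρ + t + q)) ∧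
      ∀ d, (1 ≤ d ∧ ∀ t, t + d < m → x (ρ + t) = x (ρ + t + d)) → q ≤ d :=
    ⟨Nat.find hex, Nat.find_spec hex, fun d hd => Nat.find_min' hex hd⟩
  have hqm : q ≤ m := hqmin m ⟨by omega, fun t ht => by omega⟩
  let O : ℕ → Prop := fun i => ∀ t < m, x (ρ + t) = x (i + t)
  have Oper : ∀ i d, O i → O (i + d) → ∀ t, t + d < m → x (ρ + t) = x (ρ + t + d) := by
    intro i d h1 h2 t ht
    rw [h2 t (by omega), add_assoc ρ t d, h1 (t + d) ht]
    congr 1; omega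
  have Ogap : ∀ i j, O i → O j → i < j → i + q ≤ j := by
    intro i j h1 h2 hij
    have := hqmin (j - i) ⟨by omega, Oper i (j - i) h1 (by rwa [show i + (j - i) = j by omega])⟩
    omega
  let Fi : ℕ → Prop := fun i => O i ∧ (h < q ∨ ∀ j, j + q = i → ¬ O j)
  let La : ℕ → Prop := fun i => O i ∧ (h < q ∨ ¬ O (i + q))
  have Fsp : ∀ i j, Fi i → Fi j → i < j → i + h ≤ j := by
    intro i j hi hj hij
    have hg := Ogap i j hi.1 hj.1 hij
    rcases hj.2 with h1 | h1
    · omega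
    · by_contra hlt
      push Not at hlt
      by_cases hq : h < q
      · omega
      refine h1 (j - q) (by omega) ?_
      have hper := Oper i (j - i) hi.1 (by rw [show i + (j - i) = j by omega]; exact hj.1)
      intro t ht
      by_cases htq : q ≤ t
      · have e1 := hqp (t - q) (by omega)
        have e2 := hj.1 (t - q) (by omega)
        rw [show ρ + t = ρ + (t - q) + q by omega, ← e1, e2]
        congr 1; omega
      · have e1 := hi.1 (j - i - q + t) (by omega)
        have e2 := hqp (j - i - q + t) (by omega)
        have e3 := hper t (by omega)
        rw [e3, show ρ + t + (j - i) = ρ + (j - i - q + t) + q by omega, ← e2, e1]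
        congr 1; omega
  have Lsp : ∀ i j, La i → La j → i < j → i + h ≤ j := by
    intro i j hi hj hij
    have hg := Ogap i j hi.1 hj.1 hij
    rcases hi.2 with h1 | h1
    · omega
    · by_contra hlt
      push Not at hlt
      by_cases hq : h < q
      · omega
      refine h1 ?_
      have hper := Oper i (j - i) hi.1 (by rw [show i + (j - i) = j by omega]; exact hj.1)
      intro t ht
      by_cases htq : q + t < m
      · have e1 := hqp t (by omega)
        have e2 := hi.1 (t + q) (by omega)
        rw [e1, add_assoc, e2]
        congr 1; omega
      · have e1 := hj.1 (q + t - (j - i)) (by omega)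
        have e2 := hqp (t - (j - i)) (by omega)
        have e3 := hper (t - (j - i)) (by omega)
        rw [show ρ + t = ρ + (t - (j - i)) + (j - i) by omega, ← e3, e2,
          show ρ + (t - (j - i)) + q = ρ + (q + t - (j - i)) by omega, e1]
        congr 1; omega
  have Floc : ∀ i j, W ≤ i → W ≤ j → (∀ t < 2 * W, x (i - W + t) = x (j - W + t)) →
      Fi i → Fi j := by
    intro i j hi hj hc hF
    refine ⟨?_, hF.2.imp id ?_⟩
    · intro t ht
      have := hc (W + t) (by omega)
      rw [hF.1 t ht, show i + t = i - W + (W + t) by omega, this]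
      congr 1; omega
    · intro h1 j' hj' hO
      refine h1 (i - q) (by omega) ?_
      intro t ht
      have := hc (W - q + t) (by omega)
      rw [hO t ht, show j' + t = j - W + (W - q + t) by omega, ← this]
      congr 1; omega
  have Lloc : ∀ i j, W ≤ i → W ≤ j → (∀ t < 2 * W, x (i - W + t) = x (j - W + t)) →
      La i → La j := by
    intro i j hi hj hc hF
    refine ⟨?_, hF.2.imp id ?_⟩
    · intro t ht
      have := hc (W + t) (by omega)
      rw [hF.1 t ht, show i + t = i - W + (W + t) by omega, this]
      congr 1; omega
    · intro h1 hO
      refine h1 ?_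
      intro t ht
      have := hc (W + q + t) (by omega)
      rw [hO t ht, show j + q + t = j - W + (W + q + t) by omega, ← this]
      congr 1; omega
  let fL : ℕ → ℕ → List A := fun n i => wordSeg x (i + h - n) n
  let fR : ℕ → ℕ → List A := fun n i => wordSeg x (i + h) n
  have hfL : ∀ n ≤ Nmax, ∀ i j, W ≤ i → W ≤ j →
      (∀ t < 2 * W, x (i - W + t) = x (j - W + t)) → fL n i = fL n j := by
    intro n hn i j hi hj hc
    refine (wordSeg_eq_iff _ _ _ _).2 fun t ht => ?_
    have := hc (W + h - n + t) (by omega)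
    rw [show i + h - n + t = i - W + (W + h - n + t) by omega, this]
    congr 1; omega
  have hfR : ∀ n ≤ Nmax, ∀ i j, W ≤ i → W ≤ j →
      (∀ t < 2 * W, x (i - W + t) = x (j - W + t)) → fR n i = fR n j := by
    intro n hn i j hi hj hc
    refine (wordSeg_eq_iff _ _ _ _).2 fun t ht => ?_
    have := hc (W + h + t) (by omega)
    rw [show i + h + t = i - W + (W + h + t) by omega, this]
    congr 1; omega
  let PL : ℕ → ℕ → Prop := fun n i => O i ∧ q ≤ h ∧ n ≤ i + h ∧
    ∀ t, i + h - n ≤ t → t < i → x t = x (t + q)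
  let PR : ℕ → ℕ → Prop := fun n i => O i ∧ q ≤ h ∧
    ∀ t, i ≤ t → t + q < i + h + n → x t = x (t + q)
  have hPL : ∀ n i j, PL n i → PL n j → fL n i = fL n j := by
    intro n i j hi hj
    have key : ∀ t, t < n → x (i + h - 1 - t) = x (j + h - 1 - t) := by
      intro t
      induction t using Nat.strong_induction_on with
      | _ t ih =>
        intro ht
        obtain ⟨i1, i2, i3, i4⟩ := hi
        obtain ⟨j1, j2, j3, j4⟩ := hj
        by_cases hth : t < h
        · rw [show i + h - 1 - t = i + (h - 1 - t) by omega,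
            show j + h - 1 - t = j + (h - 1 - t) by omega, ← i1 _ (by omega), ← j1 _ (by omega)]
        · have e1 := i4 (i + h - 1 - t) (by omega) (by omega)
          have e2 := j4 (j + h - 1 - t) (by omega) (by omega)
          rw [e1, e2, show i + h - 1 - t + q = i + h - 1 - (t - q) by omega,
            show j + h - 1 - t + q = j + h - 1 - (t - q) by omega]
          exact ih (t - q) (by omega) (by omega)
    refine (wordSeg_eq_iff _ _ _ _).2 fun t ht => ?_
    have := key (n - 1 - t) (by omega)
    have hi3 := hi.2.2.1
    have hj3 := hj.2.2.1
    rw [show i + h - n + t = i + h - 1 - (n - 1 - t) by omega, this]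
    congr 1; omega
  have hPR : ∀ n i j, PR n i → PR n j → fR n i = fR n j := by
    intro n i j hi hj
    obtain ⟨i1, i2, i4⟩ := hi
    obtain ⟨j1, j2, j4⟩ := hj
    refine (wordSeg_eq_iff _ _ _ _).2 fun t => ?_
    induction t using Nat.strong_induction_on with
    | _ t ih =>
      intro ht
      by_cases hth : h + t < m
      · rw [add_assoc, add_assoc, ← i1 _ (by omega), ← j1 _ (by omega)]
      · have e1 := i4 (i + h + (t - q)) (by omega) (by omega)
        have e2 := j4 (j + h + (t - q)) (by omega) (by omega)
        rw [show i + h + t = i + h + (t - q) + q by omega,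
          show j + h + t = j + h + (t - q) + q by omega, ← e1, ← e2]
        exact ih (t - q) (by omega) (by omega)
  refine ⟨{w | (∃ i, Fi i ∧ w = fL w.length i) ∨ (∃ i, Fi i ∧ w = fR w.length i) ∨
    (∃ i, La i ∧ w = fL w.length i) ∨ (∃ i, La i ∧ w = fR w.length i) ∨
    (∃ i, PL w.length i ∧ w = fL w.length i) ∨ (∃ i, PR w.length i ∧ w = fR w.length i)}, ?_, ?_⟩
  · intro n hn
    have hW1 : 1 ≤ W := by omega
    have hh1 : 1 ≤ h := by omega
    have a1 := count_lemma x Fi W h K hh1 hW1 Fsp Floc (fL n) (hfL n hn) hp n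
      (fun i => wordSeg_length _ _ _)
    have a2 := count_lemma x Fi W h K hh1 hW1 Fsp Floc (fR n) (hfR n hn) hp n
      (fun i => wordSeg_length _ _ _)
    have a3 := count_lemma x La W h K hh1 hW1 Lsp Lloc (fL n) (hfL n hn) hp n
      (fun i => wordSeg_length _ _ _)
    have a4 := count_lemma x La W h K hh1 hW1 Lsp Lloc (fR n) (hfR n hn) hp n
      (fun i => wordSeg_length _ _ _)
    have a5 : {w | ∃ i, PL n i ∧ w = fL n i}.ncard ≤ 1 := by
      have hs : {w | ∃ i, PL n i ∧ w = fL n i}.Subsingleton := by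
        rintro w ⟨i, hi, rfl⟩ w' ⟨j, hj, rfl⟩
        exact hPL n i j hi hj
      exact (Set.ncard_le_one hs.finite).2 fun a ha b hb => hs ha hb
    have a6 : {w | ∃ i, PR n i ∧ w = fR n i}.ncard ≤ 1 := by
      have hs : {w | ∃ i, PR n i ∧ w = fR n i}.Subsingleton := by
        rintro w ⟨i, hi, rfl⟩ w' ⟨j, hj, rfl⟩
        exact hPR n i j hi hj
      exact (Set.ncard_le_one hs.finite).2 fun a ha b hb => hs ha hb
    set T1 := {w | ∃ i, Fi i ∧ w = fL n i}
    set T2 := {w | ∃ i, Fi i ∧ w = fR n i}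
    set T3 := {w | ∃ i, La i ∧ w = fL n i}
    set T4 := {w | ∃ i, La i ∧ w = fR n i}
    set T5 := {w | ∃ i, PL n i ∧ w = fL n i}
    set T6 := {w | ∃ i, PR n i ∧ w = fR n i}
    have hfin : (T1 ∪ (T2 ∪ (T3 ∪ (T4 ∪ (T5 ∪ T6))))).Finite := by
      apply (List.finite_length_eq A n).subset
      rintro w (⟨i, _, rfl⟩ | ⟨i, _, rfl⟩ | ⟨i, _, rfl⟩ | ⟨i, _, rfl⟩ | ⟨i, _, rfl⟩ | ⟨i, _, rfl⟩) <;>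
      exact wordSeg_length _ _ _
    refine (Set.ncard_le_ncard (t := T1 ∪ (T2 ∪ (T3 ∪ (T4 ∪ (T5 ∪ T6))))) ?_ hfin).trans ?_
    · rintro w ⟨hw, rfl⟩
      exact hw
    · have b1 := Set.ncard_union_le T1 (T2 ∪ (T3 ∪ (T4 ∪ (T5 ∪ T6))))
      have b2 := Set.ncard_union_le T2 (T3 ∪ (T4 ∪ (T5 ∪ T6)))
      have b3 := Set.ncard_union_le T3 (T4 ∪ (T5 ∪ T6))
      have b4 := Set.ncard_union_le T4 (T5 ∪ T6)
      have b5 := Set.ncard_union_le T5 T6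
      omega
  · intro a N i hN hai hiN hO
    have L1 : ∀ i, a ≤ i → wordSeg x a (i + h - a) = fL (wordSeg x a (i + h - a)).length i := by
      intro i hi
      rw [wordSeg_length]
      show _ = wordSeg x (i + h - (i + h - a)) (i + h - a)
      congr 1; omega
    have R1 : ∀ i, wordSeg x (i + h) (a + N - (i + h)) =
        fR (wordSeg x (i + h) (a + N - (i + h))).length i := by
      intro i
      rw [wordSeg_length]
    by_cases hF : ∃ i, a ≤ i ∧ i + m ≤ a + N ∧ Fi i
    · obtain ⟨i, h1, h2, h3⟩ := hF
      exact ⟨i + h, by omega, by omega, Or.inl ⟨i, h3, L1 i h1⟩, Or.inr (Or.inl ⟨i, h3, R1 i⟩)⟩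
    by_cases hL : ∃ i, a ≤ i ∧ i + m ≤ a + N ∧ La i
    · obtain ⟨i, h1, h2, h3⟩ := hL
      exact ⟨i + h, by omega, by omega, Or.inr (Or.inr (Or.inl ⟨i, h3, L1 i h1⟩)),
        Or.inr (Or.inr (Or.inr (Or.inl ⟨i, h3, R1 i⟩)))⟩
    push Not at hF hL
    have hqh : q ≤ h := by
      by_contra hlt
      exact hF i hai hiN ⟨hO, Or.inl (by omega)⟩
    have nF : ∀ i, a ≤ i → i + m ≤ a + N → O i → ∃ j, j + q = i ∧ O j := by
      intro i h1 h2 h3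
      by_contra hcon
      push Not at hcon
      exact hF i h1 h2 ⟨h3, Or.inr hcon⟩
    have nL : ∀ i, a ≤ i → i + m ≤ a + N → O i → O (i + q) := by
      intro i h1 h2 h3
      by_contra hcon
      exact hL i h1 h2 ⟨h3, Or.inr hcon⟩
    have perL : ∀ i, a ≤ i → i + m ≤ a + N → O i → ∀ t, a ≤ t → t < i → x t = x (t + q) := by
      intro i
      induction i using Nat.strong_induction_on with
      | _ i ih =>
        intro h1 h2 h3 t ht1 ht2
        obtain ⟨j, hj, hjO⟩ := nF i h1 h2 h3
        by_cases htj : t < j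
        · exact ih j (by omega) (by omega) (by omega) hjO t ht1 htj
        · have e1 := hjO (t - j) (by omega)
          have e2 := h3 (t - j) (by omega)
          rw [show t + q = i + (t - j) by omega, ← e2, e1]
          congr 1; omega
    have perR : ∀ k i, a + N - i = k → a ≤ i → i + m ≤ a + N → O i →
        ∀ t, i ≤ t → t + q < a + N → x t = x (t + q) := by
      intro k
      induction k using Nat.strong_induction_on with
      | _ k ih =>
        intro i hk h1 h2 h3 t ht1 ht2
        have h4 := nL i h1 h2 h3
        by_cases htm : t < i + m
        · have e1 := h3 (t - i) (by omega)
          have e2 := h4 (t - i) (by omega)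
          rw [show t + q = i + q + (t - i) by omega, ← e2, e1]
          congr 1; omega
        · exact ih (a + N - (i + q)) (by omega) (i + q) rfl (by omega) (by omega) h4 t
            (by omega) ht2
    refine ⟨i + h, by omega, by omega,
      Or.inr (Or.inr (Or.inr (Or.inr (Or.inl ⟨i, ?_, L1 i hai⟩)))),
      Or.inr (Or.inr (Or.inr (Or.inr (Or.inr ⟨i, ?_, R1 i⟩))))⟩
    · rw [wordSeg_length]
      exact ⟨hO, hqh, by omega, fun t ht1 ht2 => perL i hai hiN hO t (by omega) ht2⟩
    · rw [wordSeg_length]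
      exact ⟨hO, hqh, fun t ht1 ht2 => perR _ i rfl hai hiN hO t ht1 (by omega)⟩

lemma scale_lemma [Fintype A] (x : ℕ → A) (hx : ¬ UltimatelyPeriodic x) (C L M' : ℕ)
    (hC : ∀ n, 1 ≤ n → complexity (Fac x) n ≤ C * n) (hL : L = 2 * C + 2) (hM : 1 ≤ M') :
    ∃ S : Set (List A),
      (∀ n, complexity S n ≤ 2 * C * (4 * (3 * C * (8 * L + 1) + (16 * L + 1)) + 2)) ∧
      (∀ w ∈ S, M' ≤ w.length ∧ w.length ≤ 4 * L * M') ∧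
      ∀ a N, 2 * L * M' ≤ N → N ≤ 4 * L * M' → wordSeg x a N ∈ prodL S S := by
  classical
  obtain ⟨m, hm1, hm2, hm3⟩ : ∃ m, 2 * M' ≤ m ∧ m < 4 * M' ∧
      complexity (Fac x) (m + 1) ≤ complexity (Fac x) m + 2 * C := by
    by_contra hcon
    push Not at hcon
    have key : ∀ j ≤ 2 * M', j * (2 * C + 1) ≤ complexity (Fac x) (2 * M' + j) := by
      intro j
      induction j with
      | zero => intro _; simp
      | succ j ih =>
        intro hj
        have h1 := ih (by omega)
        have h2 := hcon (2 * M' + j) (by omega) (by omega)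
        rw [Nat.add_mul]
        rw [← add_assoc]
        omega
    have h1 := key (2 * M') le_rfl
    have h2 := hC (2 * M' + 2 * M') (by omega)
    nlinarith
  obtain ⟨R, hR, hR2⟩ := marker_lemma x hx m (2 * C) hm3
  have hXL : M' ≤ L * M' := Nat.le_mul_of_pos_left _ (by omega)
  have hXL2 : 2 * M' ≤ L * M' := Nat.mul_le_mul_right _ (by omega)
  have core := fun ρ => core_lemma x m (m / 2) (8 * (L * M')) (3 * C) ρ (4 * (L * M')) (by omega) rfl
    (by omega) (by omega) (by
      refine (hC _ (by omega)).trans (le_of_eq (by ring)))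
  choose S hS1 hS2 using core
  have hd1 : 8 * (L * M') / (m / 2) ≤ 8 * L := by
    apply Nat.div_le_of_le_mul
    calc 8 * (L * M') = M' * (8 * L) := by ring
      _ ≤ _ := Nat.mul_le_mul_right _ (by omega)
  have hd2 : 2 * (8 * (L * M')) / (m / 2) ≤ 16 * L := by
    apply Nat.div_le_of_le_mul
    calc 2 * (8 * (L * M')) = M' * (16 * L) := by ring
      _ ≤ _ := Nat.mul_le_mul_right _ (by omega)
  refine ⟨{w | ∃ ρ ∈ R, w ∈ S ρ ∧ M' ≤ w.length ∧ w.length ≤ 4 * L * M'}, ?_, ?_, ?_⟩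
  · intro n
    by_cases hn : n ≤ 4 * L * M'
    · have hsub : {u ∈ {w | ∃ ρ ∈ R, w ∈ S ρ ∧ M' ≤ w.length ∧ w.length ≤ 4 * L * M'} |
          u.length = n} ⊆ ⋃ ρ ∈ R, {u ∈ S ρ | u.length = n} := by
        rintro w ⟨⟨ρ, h1, h2, _⟩, h3⟩
        simp only [Set.mem_iUnion]
        exact ⟨ρ, h1, h2, h3⟩
      have hfin : (⋃ ρ ∈ R, {u ∈ S ρ | u.length = n}).Finite :=
        Set.Finite.biUnion R.finite_toSet fun ρ _ => finite_len _ _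
      refine (Set.ncard_le_ncard hsub hfin).trans ?_
      refine (Finset.set_ncard_biUnion_le R _).trans ?_
      refine (Finset.sum_le_card_nsmul R _
        (4 * (3 * C * (8 * L + 1) + (16 * L + 1)) + 2) ?_).trans ?_
      · intro ρ _
        refine (hS1 ρ n (by rw [← mul_assoc]; exact hn)).trans ?_
        gcongr
      · rw [smul_eq_mul]
        exact Nat.mul_le_mul_right _ hR
    · have : {u ∈ {w | ∃ ρ ∈ R, w ∈ S ρ ∧ M' ≤ w.length ∧ w.length ≤ 4 * L * M'} |
          u.length = n} = ∅ := by
        ext w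
        simp only [Set.mem_setOf_eq, Set.mem_empty_iff_false, iff_false]
        rintro ⟨⟨ρ, h1, h2, h3, h4⟩, h5⟩
        omega
      rw [complexity, this]; simp
  · rintro w ⟨ρ, _, _, h⟩
    exact h
  · intro a N h1 h2
    obtain ⟨i, hi1, hi2, ρ, hρ, ho⟩ := hR2 a
    have h3 := hC m (by omega)
    have h4 : C * m + m ≤ 2 * L * M' := by
      calc C * m + m = (C + 1) * m := by ring
        _ ≤ (C + 1) * (4 * M') := Nat.mul_le_mul_left _ (by omega)
        _ = 2 * L * M' := by rw [hL]; ring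
    obtain ⟨c, c1, c2, c3, c4⟩ := hS2 ρ a N i (by rw [← mul_assoc]; exact h2) hi1 (by omega) ho
    refine ⟨_, ⟨ρ, hρ, c3, ?_⟩, _, ⟨ρ, hρ, c4, ?_⟩, ?_⟩
    · rw [wordSeg_length]; omega
    · rw [wordSeg_length]; omega
    · conv_rhs => rw [show c = a + (c - a) by omega]
      rw [show a + (c - a) - a = c - a by omega, wordSeg_append]
      congr 1; omega

lemma powL_two (S : Set (List A)) : prodL S S ⊆ powL S 2 := by
  rintro w ⟨s, hs, t, ht, rfl⟩
  exact ⟨s, ⟨[], rfl, s, hs, rfl⟩, t, ht, rfl⟩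

lemma main_lemma [Fintype A] (x : ℕ → A) (hx : ¬ UltimatelyPeriodic x) (C : ℕ)
    (hC : ∀ n, 1 ≤ n → complexity (Fac x) n ≤ C * n) :
    ∃ S : Set (List A), (∃ B : ℕ, ∀ n, 1 ≤ n → complexity S n ≤ B) ∧ Fac x ⊆ powL S 2 := by
  classical
  obtain ⟨L, hL⟩ : ∃ L, L = 2 * C + 2 := ⟨_, rfl⟩
  have sc := fun k : ℕ => scale_lemma x hx C L (2 ^ k) hC hL Nat.one_le_two_pow
  choose S hS1 hS2 hS3 using sc
  set E := 2 * C * (4 * (3 * C * (8 * L + 1) + (16 * L + 1)) + 2) with hE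
  set S0 : Set (List A) := {w | w.length < 2 * L} with hS0
  refine ⟨S0 ∪ {w | ∃ k, w ∈ S k}, ⟨∑ j ∈ Finset.range (2 * L), complexity S0 j +
    (4 * L + 1) * E, ?_⟩, ?_⟩
  · intro n hn
    set Kn := (Finset.range n).filter (fun k => 2 ^ k ≤ n ∧ n ≤ 4 * L * 2 ^ k) with hKn
    have hKc : Kn.card ≤ 4 * L + 1 := by
      rcases Kn.eq_empty_or_nonempty with he | hne
      · rw [he]; simp
      · set k0 := Kn.min' hne with hk0
        have h0 : k0 ∈ Kn := Finset.min'_mem _ _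
        have : Kn ⊆ Finset.Ico k0 (k0 + (4 * L + 1)) := by
          intro k hk
          have hle : k0 ≤ k := Finset.min'_le _ _ hk
          simp only [hKn, Finset.mem_filter] at hk h0
          obtain ⟨d, rfl⟩ := Nat.exists_eq_add_of_le hle
          have h1 : 2 ^ k0 * 2 ^ d ≤ 2 ^ k0 * (4 * L) := by
            rw [← pow_add, mul_comm (2 ^ k0) (4 * L)]
            omega
          have h2 := Nat.le_of_mul_le_mul_left h1 (by positivity)
          have h3 := @Nat.lt_two_pow_self d
          simp only [Finset.mem_Ico]
          omega
        simpa using Finset.card_le_card this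
    have hsub : {u ∈ S0 ∪ {w | ∃ k, w ∈ S k} | u.length = n} ⊆
        {u ∈ S0 | u.length = n} ∪ ⋃ k ∈ Kn, {u ∈ S k | u.length = n} := by
      rintro w ⟨h1 | ⟨k, hk⟩, h2⟩
      · exact Or.inl ⟨h1, h2⟩
      · right
        simp only [Set.mem_iUnion]
        have h3 := hS2 k w hk
        have h4 := @Nat.lt_two_pow_self k
        rw [h2] at h3
        refine ⟨k, ?_, hk, h2⟩
        simp only [hKn, Finset.mem_filter, Finset.mem_range]
        exact ⟨by omega, h3⟩
    have hfin : (⋃ k ∈ Kn, {u ∈ S k | u.length = n}).Finite :=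
      Set.Finite.biUnion Kn.finite_toSet fun ρ _ => finite_len _ _
    refine (Set.ncard_le_ncard hsub ((finite_len _ _).union hfin)).trans ?_
    refine (Set.ncard_union_le _ _).trans ?_
    apply Nat.add_le_add
    · change complexity S0 n ≤ _
      by_cases hn2 : n < 2 * L
      · exact Finset.single_le_sum (f := fun j => complexity S0 j) (fun _ _ => Nat.zero_le _)
          (Finset.mem_range.2 hn2)
      · have : {u ∈ S0 | u.length = n} = ∅ := by
          ext w
          simp only [hS0, Set.mem_setOf_eq, Set.mem_empty_iff_false, iff_false]
          omega
        rw [complexity, this]; simp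
    · refine (Finset.set_ncard_biUnion_le Kn _).trans ?_
      refine (Finset.sum_le_card_nsmul Kn _ E ?_).trans ?_
      · intro k _
        exact hS1 k n
      · rw [smul_eq_mul]
        exact Nat.mul_le_mul_right _ hKc
  · rintro w ⟨a, N, rfl⟩
    apply powL_two
    by_cases hN : N < 2 * L
    · refine ⟨[], Or.inl (by simp only [hS0, Set.mem_setOf_eq, List.length_nil]; omega),
        wordSeg x a N, Or.inl (by simpa only [hS0, Set.mem_setOf_eq, wordSeg_length] using hN), rfl⟩
    · have hd : N / (2 * L) ≠ 0 := by
        have := Nat.div_pos (show 2 * L ≤ N by omega) (by omega)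
        omega
      have h1 := Nat.pow_log_le_self 2 hd
      have h2 := Nat.lt_pow_succ_log_self (b := 2) (by norm_num) (N / (2 * L))
      set k := Nat.log 2 (N / (2 * L)) with hk
      obtain ⟨s, hs, t, ht, he⟩ := hS3 k a N (by
          rw [mul_comm]
          exact (Nat.le_div_iff_mul_le (by omega)).1 h1) (by
          have := (Nat.div_lt_iff_lt_mul (by omega)).1 h2
          rw [pow_succ] at this
          nlinarith)
      exact ⟨s, Or.inr ⟨k, hs⟩, t, Or.inr ⟨k, ht⟩, he⟩

lemma main_lemma' [Fintype A] (x : ℕ → A) (C : ℕ)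
    (hC : ∀ n, 1 ≤ n → complexity (Fac x) n ≤ C * n) :
    ∃ S : Set (List A), (∃ B : ℕ, ∀ n, 1 ≤ n → complexity S n ≤ B) ∧ Fac x ⊆ powL S 2 := by
  by_cases hx : UltimatelyPeriodic x
  · obtain ⟨B, hB⟩ := periodic_bounded x hx
    refine ⟨Fac x, ⟨B, fun n _ => hB n⟩, fun w hw => powL_two _ ?_⟩
    exact ⟨[], ⟨0, 0, rfl⟩, w, hw, rfl⟩
  · exact main_lemma x hx C hC

lemma morse_hedlund [Fintype A] (x : ℕ → A) (hx : ¬ UltimatelyPeriodic x) (n : ℕ) :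
    n ≤ complexity (Fac x) n := by
  induction n with
  | zero => simp
  | succ n ih =>
    by_contra hcon
    obtain ⟨R, hR, h2⟩ := marker_lemma x hx n 0 (by omega)
    obtain ⟨i, _, _, ρ, hρ, _⟩ := h2 0
    rw [Finset.card_eq_zero.1 (Nat.le_zero.1 hR)] at hρ
    simp at hρ

lemma polyBound_zero_iff (f : ℕ → ℕ) :
    PolyBound f 0 ↔ ∃ B : ℕ, ∀ n, 1 ≤ n → f n ≤ B := by
  constructor
  · rintro ⟨C, hC⟩
    refine ⟨⌈C⌉₊, fun n hn => ?_⟩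
    have := hC n hn
    rw [Real.rpow_zero, mul_one] at this
    exact_mod_cast this.trans (Nat.le_ceil C)
  · rintro ⟨B, hB⟩
    refine ⟨B, fun n hn => ?_⟩
    rw [Real.rpow_zero, mul_one]
    exact_mod_cast hB n hn

lemma square_bound [Fintype A] (S L : Set (List A)) (B : ℕ)
    (hB : ∀ n, 1 ≤ n → complexity S n ≤ B) (hL : L ⊆ powL S 2) (n : ℕ) :
    complexity L n ≤ (n + 1) * ((B + 1) * (B + 1)) := by
  classical
  have hB' : ∀ n, complexity S n ≤ B + 1 := by
    intro n
    rcases Nat.eq_zero_or_pos n with rfl | hn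
    · have : {u ∈ S | u.length = 0} ⊆ {[]} := by
        rintro u ⟨_, hu⟩
        simpa using hu
      have := Set.ncard_le_ncard this (Set.finite_singleton _)
      rw [Set.ncard_singleton] at this
      unfold complexity
      omega
    · exact (hB n hn).trans (by omega)
  have hsub : {u ∈ L | u.length = n} ⊆ ⋃ i ∈ Finset.range (n + 1),
      (fun p : List A × List A => p.1 ++ p.2) ''
        ({u ∈ S | u.length = i} ×ˢ {u ∈ S | u.length = n - i}) := by
    rintro u ⟨hu, hn⟩
    obtain ⟨s, ⟨e, he, s', hs', rfl⟩, t, ht, rfl⟩ := hL hu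
    have he' : e = [] := he
    subst he'
    simp only [List.nil_append, List.length_append] at hn
    simp only [Set.mem_iUnion]
    refine ⟨s'.length, Finset.mem_range.2 (by omega), (s', t), ⟨⟨hs', rfl⟩, ht, ?_⟩, rfl⟩
    simp only; omega
  have hfin : ∀ i, ({u ∈ S | u.length = i} ×ˢ {u ∈ S | u.length = n - i}).Finite :=
    fun i => (finite_len _ _).prod (finite_len _ _)
  refine (Set.ncard_le_ncard hsub
    (Set.Finite.biUnion (Finset.finite_toSet _) fun i _ => (hfin i).image _)).trans ?_
  refine (Finset.set_ncard_biUnion_le _ _).trans ?_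
  refine (Finset.sum_le_card_nsmul _ _ ((B + 1) * (B + 1)) ?_).trans (by simp)
  intro i _
  refine (Set.ncard_image_le (hfin i)).trans ?_
  rw [Set.ncard_prod]
  exact Nat.mul_le_mul (hB' _) (hB' _)

lemma polyDim_le_two [Fintype A] (x : ℕ → A) (C : ℕ)
    (hC : ∀ n, 1 ≤ n → complexity (Fac x) n ≤ C * n) : polyDim 0 (Fac x) ≤ 2 := by
  obtain ⟨S, hB, hS⟩ := main_lemma' x C hC
  exact sInf_le ⟨2, rfl, by omega, S, (polyBound_zero_iff _).2 hB, hS⟩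

lemma dim_one_iff [Fintype A] (x : ℕ → A) :
    (∃ S : Set (List A), PolyBound (complexity S) 0 ∧ Fac x ⊆ powL S 1) ↔
      ∃ B : ℕ, ∀ n, 1 ≤ n → complexity (Fac x) n ≤ B := by
  constructor
  · rintro ⟨S, hS, h⟩
    obtain ⟨B, hB⟩ := (polyBound_zero_iff _).1 hS
    refine ⟨B, fun n hn => (complexity_mono ?_ n).trans (hB n hn)⟩
    intro w hw
    obtain ⟨e, he, s, hs, rfl⟩ := h hw
    have he' : e = [] := he
    subst he'
    simpa using hs
  · intro h
    exact ⟨Fac x, (polyBound_zero_iff _).2 h, fun w hw => ⟨[], rfl, w, hw, rfl⟩⟩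

end Helpers

/-- `d₀(x) = 2` iff `p_x(n) = Θ(n)`; in particular every infinite word
of complexity `O(n)` has cost `0`. -/
theorem stmt13 (A : Type u) [Fintype A] [Nonempty A] (x : ℕ → A) :
    (polyDim 0 (Fac x) = 2 ↔
      ∃ c₁ c₂ : ℝ, 0 < c₁ ∧ c₁ ≤ c₂ ∧ ∃ N : ℕ, ∀ n : ℕ, N ≤ n →
        c₁ * n ≤ (complexity (Fac x) n : ℝ) ∧ (complexity (Fac x) n : ℝ) ≤ c₂ * n) ∧
    (PolyBound (complexity (Fac x)) 1 → cost (Fac x) = 0) := by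
  constructor
  · constructor
    · intro h
      have hne : {k : ℕ∞ | ∃ m : ℕ, k = m ∧ 1 ≤ m ∧
          ∃ S : Set (List A), PolyBound (complexity S) 0 ∧ Fac x ⊆ powL S m}.Nonempty := by
        by_contra hcon
        rw [Set.not_nonempty_iff_eq_empty] at hcon
        rw [polyDim, hcon, sInf_empty] at h
        exact absurd h (by decide)
      have hmem := csInf_mem hne
      change polyDim 0 (Fac x) ∈ _ at hmem
      rw [h] at hmem
      obtain ⟨m, hm, _, S, hS, hF⟩ := hmem
      have hm2 : m = 2 := by exact_mod_cast hm.symm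
      subst hm2
      obtain ⟨B, hB⟩ := (polyBound_zero_iff _).1 hS
      have hup := square_bound S (Fac x) B hB hF
      have hnp : ¬ UltimatelyPeriodic x := by
        intro hp
        obtain ⟨B', hB'⟩ := periodic_bounded x hp
        have h1 := (dim_one_iff x).2 ⟨B', fun n _ => hB' n⟩
        have : polyDim 0 (Fac x) ≤ ((1 : ℕ) : ℕ∞) := sInf_le ⟨1, rfl, le_rfl, h1⟩
        rw [h] at this
        exact absurd (show (2 : ℕ) ≤ 1 by exact_mod_cast this) (by norm_num)
      refine ⟨1, ((2 * ((B + 1) * (B + 1)) : ℕ) : ℝ), one_pos, ?_, 1, ?_⟩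
      · have : 1 ≤ 2 * ((B + 1) * (B + 1)) := by nlinarith
        exact_mod_cast this
      · intro n hn
        constructor
        · rw [one_mul]
          exact_mod_cast morse_hedlund x hnp n
        · have : complexity (Fac x) n ≤ 2 * ((B + 1) * (B + 1)) * n := by
            refine (hup n).trans ?_
            calc (n + 1) * ((B + 1) * (B + 1)) ≤ (2 * n) * ((B + 1) * (B + 1)) :=
                  Nat.mul_le_mul_right _ (by omega)
              _ = _ := by ring
          exact_mod_cast this
    · rintro ⟨c₁, c₂, hc, _, N, hN⟩
      apply le_antisymm
      · apply polyDim_le_two x (⌈c₂⌉₊ + ∑ j ∈ Finset.range N, complexity (Fac x) j)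
        intro n hn
        rw [add_mul]
        by_cases hnN : N ≤ n
        · have h1 := (hN n hnN).2
          have h2 : (complexity (Fac x) n : ℝ) ≤ (⌈c₂⌉₊ : ℝ) * n :=
            h1.trans (mul_le_mul_of_nonneg_right (Nat.le_ceil c₂) (Nat.cast_nonneg n))
          have h3 : complexity (Fac x) n ≤ ⌈c₂⌉₊ * n := by exact_mod_cast h2
          omega
        · have h1 := Finset.single_le_sum (f := fun j => complexity (Fac x) j)
            (fun _ _ => Nat.zero_le _) (Finset.mem_range.2 (show n < N by omega))
          have h2 : (∑ j ∈ Finset.range N, complexity (Fac x) j) ≤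
            (∑ j ∈ Finset.range N, complexity (Fac x) j) * n := Nat.le_mul_of_pos_right _ hn
          omega
      · apply le_sInf
        rintro k ⟨m, rfl, hm, S, hS⟩
        have : 2 ≤ m := by
          by_contra hlt
          have hm1 : m = 1 := by omega
          subst hm1
          obtain ⟨B, hB⟩ := (dim_one_iff x).1 ⟨S, hS⟩
          obtain ⟨n, hn⟩ := exists_nat_gt ((B : ℝ) / c₁)
          rw [div_lt_iff₀ hc] at hn
          have h1 := (hN (max n (max N 1)) (by simp)).1
          have h2 := hB (max n (max N 1)) (by simp)
          have h3 : (n : ℝ) ≤ ((max n (max N 1) : ℕ) : ℝ) := by exact_mod_cast le_max_left _ _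
          have h4 : (complexity (Fac x) (max n (max N 1)) : ℝ) ≤ B := by exact_mod_cast h2
          nlinarith
        exact_mod_cast this
  · rintro ⟨C, hC⟩
    have hC' : ∀ n, 1 ≤ n → complexity (Fac x) n ≤ ⌈C⌉₊ * n := by
      intro n hn
      have h1 := hC n hn
      rw [Real.rpow_one] at h1
      have h2 : (complexity (Fac x) n : ℝ) ≤ (⌈C⌉₊ : ℝ) * n :=
        h1.trans (mul_le_mul_of_nonneg_right (Nat.le_ceil C) (Nat.cast_nonneg n))
      exact_mod_cast h2
    have hd := polyDim_le_two x _ hC'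
    refine le_antisymm (sInf_le ⟨0, le_rfl, by simp, ?_⟩) (zero_le)
    intro htop
    rw [htop] at hd
    exact absurd hd (by decide)
end
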